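/- Let Q be a graph class with Q_n nonempty for all sufficiently large n. Suppose there is a graphon W_Q ∈ Q̂ such that Ent(W_Q) = sup_{W∈Q̂} Ent(W), every W ∈ Q̂ with Ent(W) = Ent(W_Q) satisfies δ_□(W, W_Q) = 0, and (log₂|Q_n|)/C(n,2) → Ent(W_Q) as n → ∞, where |Q_n| is the number of labelled graphs on {1,…,n} in Q and C(n,2) = n(n-1)/2. For each large n let G_n be a uniformly random element of Q_n. Then G_n converges to W_Q in probability: for every ε > 0, P(δ_□(W_{G_n}, W_Q) > ε) → 0 as n → ∞. -/

import Mathlib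

open MeasureTheory Set Filter

noncomputable section

/-- A graphon: a symmetric measurable function `ℝ → ℝ → ℝ` with values in `[0,1]`
(only its values on `[0,1]²` matter). -/
def IsGraphon (W : ℝ → ℝ → ℝ) : Prop :=
  (∀ x y, W x y = W y x) ∧ Measurable (Function.uncurry W) ∧
    ∀ x y, W x y ∈ Set.Icc (0 : ℝ) 1

/-- The cut norm `‖U‖_□`, the supremum over measurable `S, T ⊆ [0,1]` of
`|∫_{S×T} U|`. -/
def cutNorm (U : ℝ → ℝ → ℝ) : ℝ :=
  sSup { r : ℝ | ∃ S T : Set ℝ, MeasurableSet S ∧ MeasurableSet T ∧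
    S ⊆ Set.Icc 0 1 ∧ T ⊆ Set.Icc 0 1 ∧
    r = |∫ p in S ×ˢ T, U p.1 p.2| }

/-- `d_□(W₁, W₂) = ‖W₁ - W₂‖_□`. -/
def dCut (W₁ W₂ : ℝ → ℝ → ℝ) : ℝ := cutNorm (fun x y => W₁ x y - W₂ x y)

/-- A Lebesgue-measure-preserving map `[0,1] → [0,1]`. -/
def IsMPSelf (σ : ℝ → ℝ) : Prop :=
  MeasureTheory.MeasurePreserving σ
      (MeasureTheory.volume.restrict (Set.Icc (0:ℝ) 1))
      (MeasureTheory.volume.restrict (Set.Icc (0:ℝ) 1)) ∧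
    Set.MapsTo σ (Set.Icc (0:ℝ) 1) (Set.Icc (0:ℝ) 1)

/-- The cut distance `δ_□(W₁, W₂)`. -/
def deltaCut (W₁ W₂ : ℝ → ℝ → ℝ) : ℝ :=
  sInf { r : ℝ | ∃ σ₁ σ₂ : ℝ → ℝ, IsMPSelf σ₁ ∧ IsMPSelf σ₂ ∧
    r = cutNorm (fun x y => W₁ (σ₁ x) (σ₁ y) - W₂ (σ₂ x) (σ₂ y)) }

/-- The binary entropy function `h` (base-2 logarithm; `logb 2 0 = 0` by convention,
so `h 0 = h 1 = 0`). -/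
def binEnt (x : ℝ) : ℝ := -x * Real.logb 2 x - (1 - x) * Real.logb 2 (1 - x)

/-- `h̃ x = h (min x (1/2))`. -/
def htilde (x : ℝ) : ℝ := binEnt (min x (1/2))

/-- The entropy `Ent(W) = ∫₀¹∫₀¹ h(W(x,y)) dx dy` of a graphon. -/
def graphonEnt (W : ℝ → ℝ → ℝ) : ℝ :=
  ∫ x in Set.Icc (0:ℝ) 1, ∫ y in Set.Icc (0:ℝ) 1, binEnt (W x y)

open Classical in
/-- The graphon `W_G` of a simple graph `G` on `{1, …, n}` (vertices as `Fin n`,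
vertex `i : Fin n` representing `i+1`): `W_G x y = 1` iff `⌈nx⌉⌈ny⌉ ∈ E(G)`. -/
def graphonOfGraph {n : ℕ} (G : SimpleGraph (Fin n)) : ℝ → ℝ → ℝ := fun x y =>
  if ∃ i j : Fin n, G.Adj i j ∧ ⌈(n : ℝ) * x⌉ = ((i : ℕ) : ℤ) + 1 ∧
      ⌈(n : ℝ) * y⌉ = ((j : ℕ) : ℤ) + 1
  then 1 else 0

/-- A labelled graph class: a set of graphs on `{1,…,n}` for each `n`. -/
abbrev GraphClass := ∀ n : ℕ, Set (SimpleGraph (Fin n))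

/-- A graph class is closed under relabelling by permutations. -/
def IsGraphClass (Q : GraphClass) : Prop :=
  ∀ (n : ℕ) (π : Equiv.Perm (Fin n)) (G : SimpleGraph (Fin n)),
    G ∈ Q n → G.comap ⇑π ∈ Q n

/-- A hereditary graph class: a graph class closed under taking induced subgraphs
(relabelled by the order-preserving bijection). -/
def IsHereditary (Q : GraphClass) : Prop :=
  IsGraphClass Q ∧
    ∀ (m n : ℕ) (f : Fin m → Fin n), StrictMono f →
      ∀ G ∈ Q n, G.comap f ∈ Q m

/-- `Q̂`: the set of graphons which are limits (in cut distance) of sequences of graphs in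
the class `Q` whose orders tend to infinity. -/
def limitSet (Q : GraphClass) : Set (ℝ → ℝ → ℝ) :=
  { W | IsGraphon W ∧
    ∃ (nk : ℕ → ℕ) (Gk : ∀ k, SimpleGraph (Fin (nk k))),
      (∀ k, Gk k ∈ Q (nk k)) ∧ Filter.Tendsto nk Filter.atTop Filter.atTop ∧
      Filter.Tendsto (fun k => deltaCut (graphonOfGraph (Gk k)) W) Filter.atTop (nhds 0) }

/-- `C(n,2) = n(n-1)/2` as a real number. -/
def choose2 (n : ℕ) : ℝ := (n : ℝ) * ((n : ℝ) - 1) / 2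

open Classical in
/-- The step function `E[W | P]` obtained by averaging `W` over the products of the
parts of the partition `P` of `[0,1]`. -/
def condExpPart {k : ℕ} (P : Fin k → Set ℝ) (W : ℝ → ℝ → ℝ) : ℝ → ℝ → ℝ := fun x y =>
  ∑ i : Fin k, ∑ j : Fin k,
    if x ∈ P i ∧ y ∈ P j then ⨍ p in (P i) ×ˢ (P j), W p.1 p.2 else 0

/-- `W̄_n`: the step function of `W` for the partition of `[0,1]` into `n` consecutive
intervals of length `1/n`. -/
def barStep (n : ℕ) (W : ℝ → ℝ → ℝ) : ℝ → ℝ → ℝ :=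
  condExpPart (fun i : Fin n => Set.Ioc (((i : ℕ) : ℝ)/n) ((((i : ℕ) : ℝ) + 1)/n)) W

/-- `N̂_□(n, δ; W)`: the number of graphs `G` on `{1,…,n}` with `d_□(W_G, W) ≤ δ`. -/
def NhatCut (n : ℕ) (δ : ℝ) (W : ℝ → ℝ → ℝ) : ℕ :=
  Nat.card {G : SimpleGraph (Fin n) // dCut (graphonOfGraph G) W ≤ δ}

/-- `N_□(n, δ; W)`: the number of graphs `G` on `{1,…,n}` with `δ_□(W_G, W) ≤ δ`. -/
def NCut (n : ℕ) (δ : ℝ) (W : ℝ → ℝ → ℝ) : ℕ :=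
  Nat.card {G : SimpleGraph (Fin n) // deltaCut (graphonOfGraph G) W ≤ δ}

open Classical in
/-- The induced density `p(F; W)` of a graph `F` on `{1,…,k}` in a graphon `W`. -/
def inducedDensity {k : ℕ} (F : SimpleGraph (Fin k)) (W : ℝ → ℝ → ℝ) : ℝ :=
  ∫ x : Fin k → ℝ in Set.univ.pi (fun _ : Fin k => Set.Icc (0:ℝ) 1),
    ∏ i : Fin k, ∏ j : Fin k,
      if i < j then (if F.Adj i j then W (x i) (x j) else 1 - W (x i) (x j)) else 1

open Classical in
/-- The randomness support graphon `1_{rand(W)}` of `W`. -/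
def randIndicator (W : ℝ → ℝ → ℝ) : ℝ → ℝ → ℝ := fun x y =>
  if 0 < W x y ∧ W x y < 1 then 1 else 0

/-- A kernel `U` is `K_r`-free if `∏_{i<j} U(x_i, x_j) = 0` for a.e. `x ∈ [0,1]^r`. -/
def KFree (r : ℕ) (U : ℝ → ℝ → ℝ) : Prop :=
  ∀ᵐ x ∂(MeasureTheory.volume.restrict (Set.univ.pi fun _ : Fin r => Set.Icc (0:ℝ) 1)),
    (∏ i : Fin r, ∏ j : Fin r, if i < j then U (x i) (x j) else 1) = 0

open Classical in
/-- The graphon `W^{(r,s)}`: equal to `1/2` off the diagonal blocks, `1` on the first `s`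
diagonal blocks `I_i × I_i`, and `0` on the remaining diagonal blocks. -/
def Wrs (r s : ℕ) : ℝ → ℝ → ℝ := fun x y =>
  if ∃ i j : Fin r, i ≠ j ∧ x ∈ Set.Ioc (((i:ℕ):ℝ)/r) ((((i:ℕ):ℝ)+1)/r) ∧
      y ∈ Set.Ioc (((j:ℕ):ℝ)/r) ((((j:ℕ):ℝ)+1)/r)
  then 1/2
  else if ∃ i : Fin r, (i:ℕ) < s ∧ x ∈ Set.Ioc (((i:ℕ):ℝ)/r) ((((i:ℕ):ℝ)+1)/r) ∧
      y ∈ Set.Ioc (((i:ℕ):ℝ)/r) ((((i:ℕ):ℝ)+1)/r)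
  then 1 else 0

/-- `E_r = ⋃_{i ≠ j} I_i × I_j` where `I_i`, `i = 1, …, r`, are the consecutive
intervals of length `1/r` in `[0,1]`. -/
def Er (r : ℕ) : Set (ℝ × ℝ) :=
  ⋃ (i : Fin r) (j : Fin r) (_ : i ≠ j),
    (Set.Ioc (((i:ℕ):ℝ)/r) ((((i:ℕ):ℝ)+1)/r)) ×ˢ (Set.Ioc (((j:ℕ):ℝ)/r) ((((j:ℕ):ℝ)+1)/r))

/-- `R_r`: the set of graphons equal to `1/2` on `E_r` and `{0,1}`-valued elsewhere
on `[0,1]²`. -/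
def Rset (r : ℕ) : Set (ℝ → ℝ → ℝ) :=
  { W | IsGraphon W ∧ (∀ p ∈ Er r, W p.1 p.2 = 1/2) ∧
      ∀ p ∈ ((Set.Icc (0:ℝ) 1) ×ˢ (Set.Icc (0:ℝ) 1)) \ Er r,
        W p.1 p.2 = 0 ∨ W p.1 p.2 = 1 }

/-- A graphon is random-free if it is `{0,1}`-valued a.e. on `[0,1]²`. -/
def IsRandomFree (W : ℝ → ℝ → ℝ) : Prop :=
  ∀ᵐ p ∂(MeasureTheory.volume.restrict ((Set.Icc (0:ℝ) 1) ×ˢ (Set.Icc (0:ℝ) 1))),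
    W (Prod.fst p) (Prod.snd p) = 0 ∨ W (Prod.fst p) (Prod.snd p) = 1


section FiniteAvg

variable {Ω Γ Δ : Type*} [Fintype Ω] [DecidableEq Γ] [DecidableEq Δ]

/-- Average of `f` over the fibre of `q` above `g`. -/
def glAvg (q : Ω → Γ) (f : Ω → ℝ) (g : Γ) : ℝ :=
  (∑ w ∈ Finset.univ.filter (fun w => q w = g), f w) /
    ((Finset.univ.filter (fun w => q w = g)).card : ℝ)

lemma glAvg_sum (q : Ω → Γ) (f : Ω → ℝ) (F : Γ → ℝ) :
    ∑ w, f w * F (q w) = ∑ w, glAvg q f (q w) * F (q w) := by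
  have key : ∀ h : Ω → ℝ, ∑ w, h w = ∑ g ∈ Finset.univ.image q,
      ∑ w ∈ Finset.univ.filter (fun w => q w = g), h w := by
    intro h
    exact (Finset.sum_fiberwise_of_maps_to (fun w _ => Finset.mem_image_of_mem q
      (Finset.mem_univ w)) h).symm
  rw [key, key]
  refine Finset.sum_congr rfl fun g hg => ?_
  have h1 : ∑ w ∈ Finset.univ.filter (fun w => q w = g), f w * F (q w)
      = (∑ w ∈ Finset.univ.filter (fun w => q w = g), f w) * F g := by
    rw [Finset.sum_mul]
    refine Finset.sum_congr rfl fun w hw => ?_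
    rw [(Finset.mem_filter.1 hw).2]
  have h2 : ∑ w ∈ Finset.univ.filter (fun w => q w = g), glAvg q f (q w) * F (q w)
      = ((Finset.univ.filter (fun w => q w = g)).card : ℝ) * (glAvg q f g * F g) := by
    rw [← nsmul_eq_mul, ← Finset.sum_const]
    refine Finset.sum_congr rfl fun w hw => ?_
    rw [(Finset.mem_filter.1 hw).2]
  rw [h1, h2]
  obtain ⟨w, _, hw⟩ := Finset.mem_image.1 hg
  have hc : ((Finset.univ.filter (fun w => q w = g)).card : ℝ) ≠ 0 := by
    rw [Nat.cast_ne_zero]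
    exact Finset.card_ne_zero_of_mem (Finset.mem_filter.2 ⟨Finset.mem_univ w, hw⟩)
  unfold glAvg
  field_simp

lemma glAvg_mem (q : Ω → Γ) (f : Ω → ℝ) (hf : ∀ w, f w ∈ Set.Icc (0:ℝ) 1) (g : Γ) :
    glAvg q f g ∈ Set.Icc (0:ℝ) 1 := by
  unfold glAvg
  constructor
  · exact div_nonneg (Finset.sum_nonneg fun w _ => (hf w).1) (Nat.cast_nonneg _)
  · apply div_le_one_of_le₀ _ (Nat.cast_nonneg _)
    calc _ ≤ ∑ w ∈ Finset.univ.filter (fun w => q w = g), (1:ℝ) :=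
          Finset.sum_le_sum fun w _ => (hf w).2
      _ = _ := by simp

lemma glAvg_pos (q : Ω → Γ) (f : Ω → ℝ) (hf : ∀ w, 0 ≤ f w) (w : Ω) (hw : 0 < f w) :
    0 < glAvg q f (q w) := by
  unfold glAvg
  have hm : w ∈ Finset.univ.filter (fun w' => q w' = q w) := by simp
  apply div_pos
  · exact Finset.sum_pos' (fun w _ => hf w) ⟨w, hm, hw⟩
  · exact_mod_cast Finset.card_pos.2 ⟨w, hm⟩

lemma glAvg_lt_one (q : Ω → Γ) (f : Ω → ℝ) (hf : ∀ w, f w ≤ 1) (w : Ω) (hw : f w < 1) :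
    glAvg q f (q w) < 1 := by
  unfold glAvg
  have hm : w ∈ Finset.univ.filter (fun w' => q w' = q w) := by simp
  rw [div_lt_one]
  · calc _ < ∑ w' ∈ Finset.univ.filter (fun w' => q w' = q w), (1:ℝ) :=
          Finset.sum_lt_sum (fun w _ => hf w) ⟨w, hm, hw⟩
      _ = _ := by simp
  · exact_mod_cast Finset.card_pos.2 ⟨w, hm⟩

lemma glAvg_energy (q : Ω → Γ) (q' : Ω → Δ) (r : Δ → Γ) (hr : ∀ w, q w = r (q' w))
    (f : Ω → ℝ) :
    ∑ w, (glAvg q' f (q' w) - glAvg q f (q w)) ^ 2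
      = ∑ w, glAvg q' f (q' w) ^ 2 - ∑ w, glAvg q f (q w) ^ 2 := by
  have h1 := glAvg_sum q' f (fun d => glAvg q f (r d))
  have h2 := glAvg_sum q f (fun g => glAvg q f g)
  simp only [← hr] at h1
  have : ∑ w, (glAvg q' f (q' w) - glAvg q f (q w)) ^ 2
      = ∑ w, glAvg q' f (q' w) ^ 2 - 2 * ∑ w, glAvg q' f (q' w) * glAvg q f (q w)
        + ∑ w, glAvg q f (q w) * glAvg q f (q w) := by
    rw [Finset.mul_sum, ← Finset.sum_sub_distrib, ← Finset.sum_add_distrib]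
    exact Finset.sum_congr rfl fun w _ => by ring
  rw [this, ← h1, h2]
  simp only [pow_two]
  ring

end FiniteAvg

open Classical in
/-- adjacency indicator on ordered pairs -/
def glAdj {n : ℕ} (G : SimpleGraph (Fin n)) (w : Fin n × Fin n) : ℝ :=
  if G.Adj w.1 w.2 then 1 else 0

lemma glAdj_mem {n : ℕ} (G : SimpleGraph (Fin n)) (w : Fin n × Fin n) :
    glAdj G w ∈ Set.Icc (0:ℝ) 1 := by
  unfold glAdj; split_ifs <;> simp

lemma glAdj_swap {n : ℕ} (G : SimpleGraph (Fin n)) (w : Fin n × Fin n) :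
    glAdj G w.swap = glAdj G w := by
  classical
  unfold glAdj
  exact if_congr (G.adj_comm _ _) rfl rfl

/-- the product colouring -/
def glPair {n : ℕ} {Γ : Type*} (c : Fin n → Γ) (w : Fin n × Fin n) : Γ × Γ := (c w.1, c w.2)

/-- block densities -/
def glDens {n : ℕ} {Γ : Type*} [DecidableEq Γ] (G : SimpleGraph (Fin n)) (c : Fin n → Γ)
    (p : Γ × Γ) : ℝ :=
  glAvg (glPair c) (glAdj G) p

lemma glDens_mem {n : ℕ} {Γ : Type*} [DecidableEq Γ] (G : SimpleGraph (Fin n)) (c : Fin n → Γ)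
    (p : Γ × Γ) : glDens G c p ∈ Set.Icc (0:ℝ) 1 := glAvg_mem _ _ (glAdj_mem G) _

lemma glDens_swap {n : ℕ} {Γ : Type*} [DecidableEq Γ] (G : SimpleGraph (Fin n)) (c : Fin n → Γ)
    (p : Γ × Γ) : glDens G c p.swap = glDens G c p := by
  unfold glDens glAvg
  congr 1
  · refine Finset.sum_nbij' Prod.swap Prod.swap ?_ ?_ ?_ ?_ ?_
    · intro w hw; simp [glPair, Prod.ext_iff] at hw ⊢; tauto
    · intro w hw; simp [glPair, Prod.ext_iff] at hw ⊢; tauto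
    · intro w _; simp
    · intro w _; simp
    · intro w _; exact (glAdj_swap G w).symm
  · norm_cast
    refine Finset.card_nbij' Prod.swap Prod.swap ?_ ?_ ?_ ?_
    · intro w hw; simp [glPair, Prod.ext_iff] at hw ⊢; tauto
    · intro w hw; simp [glPair, Prod.ext_iff] at hw ⊢; tauto
    · intro w _; simp
    · intro w _; simp

/-- The discrepancy for sets `S`, `T`. -/
def glDisc {n : ℕ} (G : SimpleGraph (Fin n)) (c : Fin n → ℕ) (p : Finset (Fin n) × Finset (Fin n)) :
    ℝ :=
  |∑ w ∈ p.1 ×ˢ p.2, (glAdj G w - glDens G c (glPair c w))|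

lemma glExistsMax {n : ℕ} (G : SimpleGraph (Fin n)) (c : Fin n → ℕ) :
    ∃ p, ∀ p', glDisc G c p' ≤ glDisc G c p := by
  obtain ⟨p, -, hp⟩ := Finset.exists_max_image
    (Finset.univ : Finset (Finset (Fin n) × Finset (Fin n))) (glDisc G c) ⟨(∅, ∅), by simp⟩
  exact ⟨p, fun p' => hp p' (Finset.mem_univ _)⟩

def glBest {n : ℕ} (G : SimpleGraph (Fin n)) (c : Fin n → ℕ) : Finset (Fin n) × Finset (Fin n) :=
  (glExistsMax G c).choose

lemma glBest_spec {n : ℕ} (G : SimpleGraph (Fin n)) (c : Fin n → ℕ)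
    (p : Finset (Fin n) × Finset (Fin n)) : glDisc G c p ≤ glDisc G c (glBest G c) :=
  (glExistsMax G c).choose_spec p

/-- the greedy refinement -/
def glNext {n : ℕ} (G : SimpleGraph (Fin n)) (c : Fin n → ℕ) (v : Fin n) : ℕ :=
  4 * c v + ((if v ∈ (glBest G c).1 then 2 else 0) + (if v ∈ (glBest G c).2 then 1 else 0))

def glSeq {n : ℕ} (G : SimpleGraph (Fin n)) : ℕ → Fin n → ℕ
  | 0 => fun _ => 0
  | j + 1 => glNext G (glSeq G j)

lemma glNext_div {n : ℕ} (G : SimpleGraph (Fin n)) (c : Fin n → ℕ) (v : Fin n) :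
    glNext G c v / 4 = c v := by
  unfold glNext; split_ifs <;> omega

lemma glSeq_lt {n : ℕ} (G : SimpleGraph (Fin n)) (j : ℕ) (v : Fin n) : glSeq G j v < 4 ^ j := by
  induction j with
  | zero => simp [glSeq]
  | succ j ih =>
    have := glNext_div G (glSeq G j) v
    simp only [glSeq, pow_succ]
    omega

lemma glSeq_div {n : ℕ} (G : SimpleGraph (Fin n)) (j i : ℕ) (v : Fin n) :
    glSeq G (j + i) v / 4 ^ i = glSeq G j v := by
  induction i with
  | zero => simp
  | succ i ih =>
    rw [pow_succ', ← Nat.div_div_eq_div_mul, ← add_assoc]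
    simp only [glSeq, glNext_div]
    exact ih

/-- energy at level `c` -/
def glEnergy {n : ℕ} (G : SimpleGraph (Fin n)) (c : Fin n → ℕ) : ℝ :=
  ∑ w, glDens G c (glPair c w) ^ 2

lemma glEnergy_le {n : ℕ} (G : SimpleGraph (Fin n)) (c : Fin n → ℕ) :
    glEnergy G c ≤ (n:ℝ) ^ 2 := by
  calc glEnergy G c ≤ ∑ w : Fin n × Fin n, (1:ℝ) := by
        apply Finset.sum_le_sum
        intro w _
        have := glDens_mem G c (glPair c w)
        exact pow_le_one₀ this.1 this.2
    _ = _ := by simp [pow_two]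

lemma glEnergy_diff {n : ℕ} (G : SimpleGraph (Fin n)) (c c' : Fin n → ℕ) (r : ℕ → ℕ)
    (hr : ∀ v, c v = r (c' v)) :
    ∑ w, (glDens G c' (glPair c' w) - glDens G c (glPair c w)) ^ 2
      = glEnergy G c' - glEnergy G c :=
  glAvg_energy (glPair c) (glPair c') (fun p => (r p.1, r p.2))
    (fun w => by simp [glPair, hr]) (glAdj G)

lemma glDisc_sq {n : ℕ} (G : SimpleGraph (Fin n)) (c : Fin n → ℕ) :
    glDisc G c (glBest G c) ^ 2 ≤ (n:ℝ) ^ 2 * (glEnergy G (glNext G c) - glEnergy G c) := by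
  set c' := glNext G c with hc'
  rw [← glEnergy_diff G c c' (fun a => a / 4) (fun v => (glNext_div G c v).symm)]
  unfold glDisc
  rw [sq_abs]
  set S := (glBest G c).1 with hS
  set T := (glBest G c).2 with hT
  have memS : ∀ v, v ∈ S ↔ 2 ≤ c' v % 4 := by
    intro v
    simp only [hc', glNext, ← hS, ← hT]
    split_ifs <;> simp_all
  have memT : ∀ v, v ∈ T ↔ c' v % 2 = 1 := by
    intro v
    simp only [hc', glNext, ← hS, ← hT]
    split_ifs <;> simp_all <;> omega
  have key := glAvg_sum (glPair c') (glAdj G)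
    (fun p => if 2 ≤ p.1 % 4 ∧ p.2 % 2 = 1 then (1:ℝ) else 0)
  have conv : ∀ f : Fin n × Fin n → ℝ, ∑ w ∈ S ×ˢ T, f w =
      ∑ w, f w * (if 2 ≤ (glPair c' w).1 % 4 ∧ (glPair c' w).2 % 2 = 1 then (1:ℝ) else 0) := by
    intro f
    simp only [mul_ite, mul_one, mul_zero]
    rw [← Finset.sum_filter]
    apply Finset.sum_congr _ (fun _ _ => rfl)
    ext w
    rw [Finset.mem_product, Finset.mem_filter, memS, memT]
    simp [glPair]
  have e1 : ∑ w ∈ S ×ˢ T, (glAdj G w - glDens G c (glPair c w))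
      = ∑ w ∈ S ×ˢ T, (glDens G c' (glPair c' w) - glDens G c (glPair c w)) := by
    rw [Finset.sum_sub_distrib, Finset.sum_sub_distrib, conv (glAdj G), key,
      conv (fun w => glDens G c' (glPair c' w))]
    rfl
  rw [e1]
  refine sq_sum_le_card_mul_sum_sq.trans ?_
  apply mul_le_mul
  · have : (S ×ˢ T).card ≤ n * n := by
      simpa using Finset.card_le_univ (S ×ˢ T)
    rw [pow_two]; exact_mod_cast this
  · exact Finset.sum_le_sum_of_subset_of_nonneg (Finset.subset_univ _)
      (fun _ _ _ => sq_nonneg _)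
  · exact Finset.sum_nonneg fun _ _ => sq_nonneg _
  · positivity

/-- normalised maximal discrepancy at level `j` -/
def glR {n : ℕ} (G : SimpleGraph (Fin n)) (j : ℕ) : ℝ :=
  glDisc G (glSeq G j) (glBest G (glSeq G j)) / (n:ℝ) ^ 2

lemma glR_nonneg {n : ℕ} (G : SimpleGraph (Fin n)) (j : ℕ) : 0 ≤ glR G j := by
  unfold glR glDisc; positivity

lemma glR_sum {n : ℕ} (hn : 0 < n) (G : SimpleGraph (Fin n)) (J : ℕ) :
    ∑ j ∈ Finset.range J, glR G j ^ 2 ≤ 1 := by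
  have hn' : (0:ℝ) < n := by exact_mod_cast hn
  have h : ∑ j ∈ Finset.range J, glR G j ^ 2 ≤ ∑ j ∈ Finset.range J,
      (glEnergy G (glSeq G (j+1)) - glEnergy G (glSeq G j)) / (n:ℝ) ^ 2 := by
    apply Finset.sum_le_sum
    intro j _
    unfold glR
    rw [div_pow, div_le_div_iff₀ (by positivity) (by positivity)]
    have := glDisc_sq G (glSeq G j)
    calc _ ≤ ((n:ℝ) ^ 2 * (glEnergy G (glNext G (glSeq G j)) - glEnergy G (glSeq G j))) * n ^ 2 :=
          mul_le_mul_of_nonneg_right this (by positivity)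
      _ = _ := by simp only [glSeq]; ring
  refine h.trans ?_
  rw [← Finset.sum_div, Finset.sum_range_sub (fun j => glEnergy G (glSeq G j))]
  rw [div_le_one (by positivity)]
  have := glEnergy_le G (glSeq G J)
  have h0 : 0 ≤ glEnergy G (glSeq G 0) := Finset.sum_nonneg fun _ _ => sq_nonneg _
  linarith

lemma glR_le_one {n : ℕ} (hn : 0 < n) (G : SimpleGraph (Fin n)) (j : ℕ) : glR G j ≤ 1 := by
  have h := glR_sum hn G (j+1)
  have h2 : glR G j ^ 2 ≤ ∑ j ∈ Finset.range (j+1), glR G j ^ 2 :=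
    Finset.single_le_sum (f := fun j => glR G j ^ 2) (fun _ _ => sq_nonneg _) (by simp)
  nlinarith [glR_nonneg G j]


/-- discrete entropy of the colouring -/
def glEnt {n : ℕ} {Γ : Type*} [DecidableEq Γ] (G : SimpleGraph (Fin n)) (c : Fin n → Γ) : ℝ :=
  ∑ w, binEnt (glDens G c (glPair c w))

/-- pairs `u < v` -/
abbrev glUp (n : ℕ) := {w : Fin n × Fin n // w.1 < w.2}

open Classical in
def glBits {n : ℕ} (G : SimpleGraph (Fin n)) (w : glUp n) : Bool := decide (G.Adj w.1.1 w.1.2)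

lemma glBits_inj {n : ℕ} : Function.Injective (glBits (n := n)) := by
  intro G H h
  have key : ∀ u v : Fin n, u < v → (G.Adj u v ↔ H.Adj u v) := by
    intro u v huv
    have := congrFun h ⟨(u, v), huv⟩
    simpa [glBits] using this
  ext u v
  rcases lt_trichotomy u v with h1 | h1 | h1
  · exact key u v h1
  · subst h1; simp
  · rw [G.adj_comm, H.adj_comm]; exact key v u h1

/-- weight of a bit -/
def glWt (p : ℝ) (b : Bool) : ℝ := if b then p else 1 - p

lemma glWt_sum {n : ℕ} (p : Fin n × Fin n → ℝ) (hp : ∀ w, p w ∈ Set.Icc (0:ℝ) 1)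
    (s : Finset (SimpleGraph (Fin n))) :
    ∑ G ∈ s, ∏ w : glUp n, glWt (p w.1) (glBits G w) ≤ 1 := by
  classical
  have h1 : ∑ b : glUp n → Bool, ∏ w : glUp n, glWt (p w.1) (b w) = 1 := by
    have := Finset.prod_univ_sum (fun _ : glUp n => (Finset.univ : Finset Bool))
      (fun w b => glWt (p w.1) b)
    rw [Fintype.piFinset_univ] at this
    rw [← this]
    apply Finset.prod_eq_one
    intro w _
    simp [glWt]
  rw [← h1]
  rw [← Finset.sum_image (s := s) (g := glBits) (f := fun b => ∏ w : glUp n, glWt (p w.1) (b w))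
    (fun a _ b _ h => glBits_inj h)]
  apply Finset.sum_le_sum_of_subset_of_nonneg (Finset.subset_univ _)
  intro b _ _
  apply Finset.prod_nonneg
  intro w _
  unfold glWt
  have := hp w.1
  split_ifs
  · exact this.1
  · linarith [this.2]

lemma glWt_lower {n : ℕ} {Γ : Type*} [DecidableEq Γ] (G : SimpleGraph (Fin n)) (c : Fin n → Γ) :
    (2:ℝ) ^ (-(glEnt G c) / 2) ≤
      ∏ w : glUp n, glWt (glDens G c (glPair c w.1)) (glBits G w) := by
  classical
  set p : Fin n × Fin n → ℝ := fun w => glDens G c (glPair c w) with hp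
  have hp01 : ∀ w, p w ∈ Set.Icc (0:ℝ) 1 := fun w => glDens_mem G c _
  have hpos : ∀ w, G.Adj w.1 w.2 → 0 < p w := fun w hw =>
    glAvg_pos (glPair c) (glAdj G) (fun w => (glAdj_mem G w).1) w (by simp [glAdj, hw])
  have hlt : ∀ w, ¬ G.Adj w.1 w.2 → p w < 1 := fun w hw =>
    glAvg_lt_one (glPair c) (glAdj G) (fun w => (glAdj_mem G w).2) w (by simp [glAdj, hw])
  have hpswap : ∀ w, p w.swap = p w := fun w => glDens_swap G c (glPair c w)
  -- log weight
  set l : Fin n × Fin n → ℝ := fun w =>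
    Real.logb 2 (if G.Adj w.1 w.2 then p w else 1 - p w) with hl
  have hW : ∀ w, 0 < (if G.Adj w.1 w.2 then p w else 1 - p w) := by
    intro w
    split_ifs with h
    · exact hpos w h
    · linarith [hlt w h]
  have hl0 : ∀ w, l w ≤ 0 := by
    intro w
    apply Real.logb_nonpos (by norm_num) (hW w).le
    split_ifs
    · exact (hp01 w).2
    · linarith [(hp01 w).1]
  have hlswap : ∀ w, l w.swap = l w := by
    intro w
    simp only [hl, hpswap]
    congr 1
    exact if_congr (G.adj_comm _ _) rfl rfl
  have hprod : ∀ w : glUp n, glWt (p w.1) (glBits G w)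
      = (if G.Adj w.1.1 w.1.2 then p w.1 else 1 - p w.1) := by
    intro w
    by_cases h : G.Adj w.1.1 w.1.2 <;> simp [glWt, glBits, h]
  have hlog : Real.logb 2 (∏ w : glUp n, glWt (p w.1) (glBits G w)) = ∑ w : glUp n, l w.1 := by
    rw [Real.logb_prod]
    · exact Finset.sum_congr rfl fun w _ => by rw [hprod]
    · intro w _; rw [hprod]; exact (hW _).ne'
  have hsumall : ∑ w, l w = - glEnt G c := by
    have e1 : ∀ w, l w = glAdj G w * Real.logb 2 (p w)
        + (Real.logb 2 (1 - p w) - glAdj G w * Real.logb 2 (1 - p w)) := by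
      intro w
      by_cases h : G.Adj w.1 w.2 <;> simp [hl, glAdj, h]
    have a1 : ∑ w, glAdj G w * Real.logb 2 (p w) = ∑ w, p w * Real.logb 2 (p w) :=
      glAvg_sum (glPair c) (glAdj G) (fun g => Real.logb 2 (glDens G c g))
    have a2 : ∑ w, glAdj G w * Real.logb 2 (1 - p w) = ∑ w, p w * Real.logb 2 (1 - p w) :=
      glAvg_sum (glPair c) (glAdj G) (fun g => Real.logb 2 (1 - glDens G c g))
    rw [Finset.sum_congr rfl (fun w _ => e1 w), Finset.sum_add_distrib, Finset.sum_sub_distrib,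
      a1, a2, ← Finset.sum_sub_distrib, ← Finset.sum_add_distrib, glEnt, ← Finset.sum_neg_distrib]
    refine Finset.sum_congr rfl fun w _ => ?_
    simp only [binEnt, hp]
    ring
  have hsplit : ∑ w, l w ≤ 2 * ∑ w : glUp n, l w.1 := by
    have e0 : ∑ w : glUp n, l w.1 = ∑ w ∈ Finset.univ.filter (fun w : Fin n × Fin n => w.1 < w.2),
        l w := by
      rw [Finset.sum_subtype (p := fun w : Fin n × Fin n => w.1 < w.2)
        (Finset.univ.filter (fun w : Fin n × Fin n => w.1 < w.2)) (by simp) l]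
    have e1 : ∑ w ∈ Finset.univ.filter (fun w : Fin n × Fin n => w.1 < w.2), l w
        = ∑ w ∈ Finset.univ.filter (fun w : Fin n × Fin n => w.2 < w.1), l w := by
      refine Finset.sum_nbij' Prod.swap Prod.swap ?_ ?_ ?_ ?_ ?_
      · intro w hw; simpa using hw
      · intro w hw; simpa using hw
      · intro w _; simp
      · intro w _; simp
      · intro w _; exact (hlswap w).symm
    have e2 : ∑ w, l w ≤ ∑ w ∈ Finset.univ.filter (fun w : Fin n × Fin n => w.1 < w.2), l w
        + ∑ w ∈ Finset.univ.filter (fun w : Fin n × Fin n => w.2 < w.1), l w := by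
      rw [Finset.sum_filter, Finset.sum_filter, ← Finset.sum_add_distrib]
      apply Finset.sum_le_sum
      intro w _
      rcases lt_trichotomy w.1 w.2 with h | h | h
      · simp [h, h.not_gt]
      · simp [h, hl0 w]
      · simp [h, h.not_gt]
    rw [e0]
    linarith
  have hprodpos : 0 < ∏ w : glUp n, glWt (p w.1) (glBits G w) :=
    Finset.prod_pos fun w _ => by rw [hprod]; exact hW _
  rw [← Real.le_logb_iff_rpow_le (by norm_num) hprodpos, hlog]
  linarith

open Classical in
/-- edge-count profile -/
def glProfile {n K : ℕ} (c : Fin n → Fin K) (G : SimpleGraph (Fin n)) (p : Fin K × Fin K) :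
    Fin (n ^ 2 + 1) :=
  ⟨(Finset.univ.filter (fun w : Fin n × Fin n => glPair c w = p ∧ G.Adj w.1 w.2)).card, by
    have := Finset.card_le_univ
      (Finset.univ.filter (fun w : Fin n × Fin n => glPair c w = p ∧ G.Adj w.1 w.2))
    simp only [Fintype.card_prod, Fintype.card_fin] at this
    rw [pow_two]; omega⟩

lemma glProfile_dens {n K : ℕ} (c : Fin n → Fin K) (G H : SimpleGraph (Fin n))
    (h : glProfile c G = glProfile c H) : glDens G c = glDens H c := by
  classical
  funext p
  have key : ∀ G : SimpleGraph (Fin n), ∑ w ∈ Finset.univ.filter (fun w => glPair c w = p),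
      glAdj G w = ((glProfile c G p : ℕ) : ℝ) := by
    intro G
    simp only [glProfile, glAdj]
    rw [← Finset.sum_filter, Finset.filter_filter]
    simp
  unfold glDens glAvg
  rw [key, key, h]

open Classical in
lemma glCount_class {n K : ℕ} (c : Fin n → Fin K) (e : Fin K × Fin K → Fin (n ^ 2 + 1)) (t : ℝ) :
    ((Finset.univ.filter (fun G : SimpleGraph (Fin n) =>
      glProfile c G = e ∧ glEnt G c ≤ t)).card : ℝ) ≤ 2 ^ (t / 2) := by
  set s := Finset.univ.filter (fun G : SimpleGraph (Fin n) => glProfile c G = e ∧ glEnt G c ≤ t)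
    with hs
  by_cases hne : s.Nonempty
  swap
  · rw [Finset.not_nonempty_iff_eq_empty.1 hne]
    simp only [Finset.card_empty, Nat.cast_zero]
    positivity
  obtain ⟨G0, hG0⟩ := hne
  have hsum := glWt_sum (fun w => glDens G0 c (glPair c w)) (fun w => glDens_mem G0 c _) s
  have hlow : ∀ G ∈ s, (2:ℝ) ^ (-t/2) ≤
      ∏ w : glUp n, glWt (glDens G0 c (glPair c w.1)) (glBits G w) := by
    intro G hG
    have h1 := (Finset.mem_filter.1 hG).2
    have h0 := (Finset.mem_filter.1 hG0).2
    rw [glProfile_dens c G0 G (h0.1.trans h1.1.symm)]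
    refine le_trans ?_ (glWt_lower G c)
    apply Real.rpow_le_rpow_of_exponent_le (by norm_num)
    linarith [h1.2]
  have := (Finset.card_nsmul_le_sum s _ _ hlow).trans hsum
  rw [nsmul_eq_mul, neg_div, Real.rpow_neg (by norm_num), ← div_eq_mul_inv,
    div_le_one (by positivity)] at this
  exact this

open Classical in
lemma glCount (n K : ℕ) (t : ℝ) :
    ((Finset.univ.filter (fun G : SimpleGraph (Fin n) =>
      ∃ c : Fin n → Fin K, glEnt G c ≤ t)).card : ℝ)
      ≤ (K:ℝ) ^ n * ((n:ℝ) ^ 2 + 1) ^ (K ^ 2) * 2 ^ (t / 2) := by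
  have hsub : Finset.univ.filter (fun G : SimpleGraph (Fin n) =>
      ∃ c : Fin n → Fin K, glEnt G c ≤ t) ⊆
      (Finset.univ : Finset ((Fin n → Fin K) × (Fin K × Fin K → Fin (n^2+1)))).biUnion
        (fun x => Finset.univ.filter (fun G : SimpleGraph (Fin n) =>
          glProfile x.1 G = x.2 ∧ glEnt G x.1 ≤ t)) := by
    intro G hG
    obtain ⟨c, hc⟩ := (Finset.mem_filter.1 hG).2
    exact Finset.mem_biUnion.2 ⟨(c, glProfile c G), Finset.mem_univ _,
      Finset.mem_filter.2 ⟨Finset.mem_univ _, rfl, hc⟩⟩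
  have h1 := (Finset.card_le_card hsub).trans Finset.card_biUnion_le
  calc _ ≤ ((∑ x : (Fin n → Fin K) × (Fin K × Fin K → Fin (n^2+1)),
        (Finset.univ.filter (fun G : SimpleGraph (Fin n) =>
          glProfile x.1 G = x.2 ∧ glEnt G x.1 ≤ t)).card : ℕ) : ℝ) := by exact_mod_cast h1
    _ ≤ ∑ x : (Fin n → Fin K) × (Fin K × Fin K → Fin (n^2+1)), (2:ℝ) ^ (t/2) := by
        push_cast
        exact Finset.sum_le_sum fun x _ => glCount_class x.1 x.2 t
    _ = _ := by
        simp [pow_two]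


lemma glAsymp (η A B : ℝ) (hη : 0 < η) :
    ∀ᶠ n : ℕ in atTop, A * n + B < η * (n:ℝ) ^ 2 := by
  have h1 : ∀ᶠ n : ℕ in atTop, (|A| + |B|) / η < (n:ℝ) :=
    tendsto_natCast_atTop_atTop.eventually_gt_atTop _
  filter_upwards [h1, eventually_ge_atTop 1] with n hn hn1
  have hn1' : (1:ℝ) ≤ n := by exact_mod_cast hn1
  rw [div_lt_iff₀ hη] at hn
  have hA : A * n ≤ |A| * n := mul_le_mul_of_nonneg_right (le_abs_self A) (by positivity)
  have hB : B ≤ |B| * n := (le_abs_self B).trans (le_mul_of_one_le_right (abs_nonneg B) hn1')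
  nlinarith

lemma glExists (Q : GraphClass) (c : ℝ) (Bad : ∀ n, SimpleGraph (Fin n) → Prop)
    (hcount : Filter.Tendsto
      (fun n : ℕ => Real.logb 2 (Nat.card ↥(Q n) : ℝ) / choose2 n) atTop (nhds c))
    (δ : ℝ) (hδ : 0 < δ)
    (hbad : ∃ᶠ n : ℕ in atTop, δ ≤ (Nat.card {G : SimpleGraph (Fin n) // G ∈ Q n ∧ Bad n G} : ℝ) /
            (Nat.card ↥(Q n) : ℝ)) (K M : ℕ) (hK : 0 < K) (η : ℝ) (hη : 0 < η) :
    ∃ n, M ≤ n ∧ 0 < n ∧ ∃ G : SimpleGraph (Fin n), G ∈ Q n ∧ Bad n G ∧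
      ∀ col : Fin n → Fin K, (c - η) * (n:ℝ) ^ 2 < glEnt G col := by
  classical
  have hQ : ∀ᶠ n : ℕ in atTop, c - η / 2 < Real.logb 2 (Nat.card ↥(Q n) : ℝ) / choose2 n :=
    hcount.eventually (lt_mem_nhds (by linarith))
  have hl2 : 0 < Real.log 2 := Real.log_pos (by norm_num)
  have has := glAsymp (η / 4)
    (Real.logb 2 K + (K:ℝ) ^ 2 * (2 / Real.log 2) + (c - η / 2) / 2) (- Real.logb 2 δ) (by linarith)
  obtain ⟨n, hn, hnQ, hnas, hnM⟩ := (hbad.and_eventually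
    (hQ.and (has.and (eventually_ge_atTop (max M 2))))).exists
  have hn2 : 2 ≤ n := (le_max_right _ _).trans hnM
  have hn2' : (2:ℝ) ≤ n := by exact_mod_cast hn2
  refine ⟨n, (le_max_left _ _).trans hnM, by omega, ?_⟩
  by_contra hcon
  push Not at hcon
  have hQpos : (0:ℝ) < (Nat.card ↥(Q n) : ℝ) := by
    rcases (Nat.cast_nonneg (α := ℝ) (Nat.card ↥(Q n))).lt_or_eq with h | h
    · exact h
    · rw [← h, div_zero] at hn; linarith
  rw [le_div_iff₀ hQpos] at hn
  have hcard : (Nat.card {G : SimpleGraph (Fin n) // G ∈ Q n ∧ Bad n G} : ℝ) ≤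
      (K:ℝ) ^ n * ((n:ℝ) ^ 2 + 1) ^ (K ^ 2) * 2 ^ (((c - η) * (n:ℝ) ^ 2) / 2) := by
    refine le_trans ?_ (glCount n K ((c - η) * (n:ℝ) ^ 2))
    rw [Nat.card_eq_fintype_card, Fintype.card_subtype]
    refine Nat.cast_le.2 ?_
    apply Finset.card_le_card
    intro G hG
    have := (Finset.mem_filter.1 hG).2
    exact Finset.mem_filter.2 ⟨Finset.mem_univ _, hcon G this.1 this.2⟩
  have hle := hn.trans hcard
  have hKpos : (0:ℝ) < K := by exact_mod_cast hK
  have hlog := Real.logb_le_logb_of_le (b := 2) (by norm_num) (by positivity) hle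
  rw [Real.logb_mul hδ.ne' hQpos.ne', Real.logb_mul (by positivity) (by positivity),
    Real.logb_mul (by positivity) (by positivity), Real.logb_pow, Real.logb_pow,
    Real.logb_rpow (by norm_num) (by norm_num)] at hlog
  have hch : 0 < choose2 n := by unfold choose2; nlinarith
  rw [lt_div_iff₀ hch] at hnQ
  have hlogn : Real.logb 2 ((n:ℝ) ^ 2 + 1) ≤ 2 / Real.log 2 * n := by
    rw [Real.logb, div_mul_eq_mul_div]
    apply div_le_div_of_nonneg_right _ hl2.le
    have h1 : Real.log ((n:ℝ) ^ 2 + 1) ≤ Real.log (((n:ℝ) + 1) ^ 2) :=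
      Real.log_le_log (by positivity) (by nlinarith)
    rw [Real.log_pow] at h1
    have h2 := Real.log_le_sub_one_of_pos (show (0:ℝ) < n + 1 by positivity)
    push_cast at h1
    linarith
  have hlogn' : ((K ^ 2 : ℕ) : ℝ) * Real.logb 2 ((n:ℝ) ^ 2 + 1) ≤
      (K:ℝ) ^ 2 * (2 / Real.log 2) * n := by
    push_cast
    rw [mul_assoc]
    exact mul_le_mul_of_nonneg_left hlogn (by positivity)
  unfold choose2 at hnQ
  nlinarith


/-- Lebesgue measure on `[0,1]` -/
abbrev glP : Measure ℝ := volume.restrict (Set.Icc (0:ℝ) 1)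

instance glP_prob : IsProbabilityMeasure glP := ⟨by simp [glP]⟩

lemma glP_ae_Ioc : ∀ᵐ x ∂glP, x ∈ Set.Ioc (0:ℝ) 1 := by
  have h1 : ∀ᵐ x ∂glP, x ∈ Set.Icc (0:ℝ) 1 := ae_restrict_mem measurableSet_Icc
  have h2 : ∀ᵐ x ∂glP, x ≠ 0 := by
    apply ae_restrict_of_ae
    simp [ae_iff]
  filter_upwards [h1, h2] with x hx hx0
  exact ⟨lt_of_le_of_ne hx.1 (Ne.symm hx0), hx.2⟩

def glVtx (n : ℕ) [NeZero n] (x : ℝ) : Fin n := Fin.ofNat n (⌈(n:ℝ) * x⌉ - 1).toNat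

lemma glVtx_meas (n : ℕ) [NeZero n] : Measurable (glVtx n) := by
  unfold glVtx
  have : Measurable (fun z : ℤ => Fin.ofNat n (z - 1).toNat) := measurable_from_top
  exact this.comp (Int.measurable_ceil.comp (measurable_const.mul measurable_id))

lemma glVtx_ceil (n : ℕ) [NeZero n] {x : ℝ} (hx : x ∈ Set.Ioc (0:ℝ) 1) :
    ⌈(n:ℝ) * x⌉ = ((glVtx n x : ℕ) : ℤ) + 1 := by
  have hn : (0:ℝ) < n := by exact_mod_cast Nat.pos_of_ne_zero (NeZero.ne n)
  have h1 : 0 < ⌈(n:ℝ) * x⌉ := Int.ceil_pos.2 (mul_pos hn hx.1)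
  have h2 : ⌈(n:ℝ) * x⌉ ≤ n := by
    apply Int.ceil_le.2
    have : (n:ℝ) * x ≤ n := by nlinarith [hx.2]
    exact_mod_cast this
  have h3 : (⌈(n:ℝ) * x⌉ - 1).toNat < n := by omega
  have h4 : (glVtx n x : ℕ) = (⌈(n:ℝ) * x⌉ - 1).toNat := by
    exact Nat.mod_eq_of_lt h3
  rw [h4]; omega

lemma glVtx_eq_of_ceil (n : ℕ) [NeZero n] {x : ℝ} (hx : x ∈ Set.Ioc (0:ℝ) 1) (v : Fin n)
    (h : ⌈(n:ℝ) * x⌉ = ((v : ℕ) : ℤ) + 1) : glVtx n x = v := by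
  have := glVtx_ceil n hx
  apply Fin.ext; omega

lemma glVtx_mono (n : ℕ) [NeZero n] {x y : ℝ} (hx : x ∈ Set.Ioc (0:ℝ) 1)
    (hy : y ∈ Set.Ioc (0:ℝ) 1) (hxy : x ≤ y) : glVtx n x ≤ glVtx n y := by
  have h1 := glVtx_ceil n hx
  have h2 := glVtx_ceil n hy
  have h3 : ⌈(n:ℝ) * x⌉ ≤ ⌈(n:ℝ) * y⌉ :=
    Int.ceil_le_ceil (mul_le_mul_of_nonneg_left hxy (Nat.cast_nonneg n))
  apply Fin.le_def.2; omega

lemma glMem_Ioc_of_ceil (n : ℕ) [NeZero n] {x : ℝ} (v : Fin n)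
    (h : ⌈(n:ℝ) * x⌉ = ((v : ℕ) : ℤ) + 1) : x ∈ Set.Ioc (0:ℝ) 1 := by
  have hn : (0:ℝ) < n := by exact_mod_cast Nat.pos_of_ne_zero (NeZero.ne n)
  constructor
  · have : 0 < ⌈(n:ℝ) * x⌉ := by omega
    exact (pos_iff_pos_of_mul_pos (Int.ceil_pos.1 this)).1 hn
  · have h2 : ⌈(n:ℝ) * x⌉ ≤ n := by have := v.2; omega
    have h3 : (n:ℝ) * x ≤ n := by exact_mod_cast Int.ceil_le.1 h2
    by_contra hc
    push Not at hc
    nlinarith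

lemma glGraphon_eq {n : ℕ} [NeZero n] (G : SimpleGraph (Fin n)) {x y : ℝ}
    (hx : x ∈ Set.Ioc (0:ℝ) 1) (hy : y ∈ Set.Ioc (0:ℝ) 1) :
    graphonOfGraph G x y = glAdj G (glVtx n x, glVtx n y) := by
  classical
  unfold graphonOfGraph glAdj
  apply if_congr _ rfl rfl
  constructor
  · rintro ⟨i, j, hij, hi, hj⟩
    rw [glVtx_eq_of_ceil n hx i hi, glVtx_eq_of_ceil n hy j hj]
    exact hij
  · intro h
    exact ⟨_, _, h, glVtx_ceil n hx, glVtx_ceil n hy⟩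

/-- uniform measure on `Fin n` -/
def glMu (n : ℕ) [NeZero n] : Measure (Fin n) := glP.map (glVtx n)

instance glMu_prob (n : ℕ) [NeZero n] : IsProbabilityMeasure (glMu n) :=
  Measure.isProbabilityMeasure_map (glVtx_meas n).aemeasurable

lemma glMu_singleton (n : ℕ) [NeZero n] (v : Fin n) : (glMu n).real {v} = 1 / n := by
  have hn : (0:ℝ) < n := by exact_mod_cast Nat.pos_of_ne_zero (NeZero.ne n)
  have h0 : glMu n {v} = volume (Set.Ioc ((v:ℕ) / (n:ℝ)) (((v:ℕ) + 1) / (n:ℝ))) := by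
    rw [glMu, Measure.map_apply (glVtx_meas n) (measurableSet_singleton v)]
    have : glVtx n ⁻¹' {v} =ᵐ[glP] Set.Ioc ((v:ℕ) / (n:ℝ)) (((v:ℕ) + 1) / (n:ℝ)) := by
      filter_upwards [glP_ae_Ioc] with x hx
      apply propext
      change glVtx n x = v ↔ x ∈ Set.Ioc _ _
      have e : glVtx n x = v ↔ ⌈(n:ℝ) * x⌉ = ((v : ℕ) : ℤ) + 1 :=
        ⟨fun h => h ▸ glVtx_ceil n hx, glVtx_eq_of_ceil n hx v⟩
      rw [e, Int.ceil_eq_iff, Set.mem_Ioc, div_lt_iff₀ hn, le_div_iff₀ hn, mul_comm x]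
      push_cast
      simp
    rw [measure_congr this, glP, Measure.restrict_apply measurableSet_Ioc,
      Set.inter_eq_left.2]
    intro x hx
    have hv : ((v:ℕ):ℝ) + 1 ≤ n := by exact_mod_cast v.2
    constructor
    · exact le_trans (by positivity) hx.1.le
    · exact hx.2.trans ((div_le_one hn).2 hv)
  rw [Measure.real, h0, Real.volume_Ioc, ENNReal.toReal_ofReal]
  · field_simp; ring
  · rw [← sub_div]; apply div_nonneg _ hn.le; linarith

lemma glInt (n : ℕ) [NeZero n] (φ : ℝ → Fin n) (hφ : MeasurePreserving φ glP (glMu n))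
    (F : Fin n × Fin n → ℝ) :
    ∫ p, F (φ p.1, φ p.2) ∂(glP.prod glP) = (∑ w, F w) / (n:ℝ) ^ 2 := by
  have hn : (n:ℝ) ≠ 0 := by exact_mod_cast (NeZero.ne n)
  have h := (hφ.prod hφ)
  have h1 : ∫ p, F (φ p.1, φ p.2) ∂(glP.prod glP) = ∫ w, F w ∂((glMu n).prod (glMu n)) := by
    rw [← h.map_eq, integral_map h.measurable.aemeasurable]
    · rfl
    · exact (measurable_of_finite F).aestronglyMeasurable
  rw [h1, integral_fintype Integrable.of_finite, Finset.sum_div]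
  refine Finset.sum_congr rfl fun w _ => ?_
  have : ({w} : Set (Fin n × Fin n)) = {w.1} ×ˢ {w.2} := by simp
  rw [this, measureReal_prod_prod, glMu_singleton, glMu_singleton, smul_eq_mul]
  field_simp

lemma glComb {ι : Type*} [Fintype ι] (s b : ι → ℝ) (a R : ℝ) (hs0 : ∀ u, 0 ≤ s u)
    (hsa : ∀ u, s u ≤ a) (ha : 0 ≤ a) (hb : ∀ S : Finset ι, |∑ u ∈ S, b u| ≤ R) :
    |∑ u, s u * b u| ≤ a * R := by
  classical
  have up : ∀ b : ι → ℝ, (∀ S : Finset ι, |∑ u ∈ S, b u| ≤ R) → ∑ u, s u * b u ≤ a * R := by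
    intro b hb
    calc ∑ u, s u * b u ≤ ∑ u, (if 0 < b u then a * b u else 0) := by
          apply Finset.sum_le_sum
          intro u _
          split_ifs with h
          · exact mul_le_mul_of_nonneg_right (hsa u) h.le
          · exact mul_nonpos_of_nonneg_of_nonpos (hs0 u) (not_lt.1 h)
      _ = a * ∑ u ∈ Finset.univ.filter (fun u => 0 < b u), b u := by
          rw [← Finset.sum_filter, Finset.mul_sum]
      _ ≤ a * R := mul_le_mul_of_nonneg_left ((le_abs_self _).trans (hb _)) ha
  rw [abs_le]
  constructor
  · have := up (fun u => - b u) (fun S => by rw [Finset.sum_neg_distrib, abs_neg]; exact hb S)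
    simp only [mul_neg, Finset.sum_neg_distrib] at this
    linarith
  · exact up b hb

lemma glCut (n : ℕ) [NeZero n] (φ : ℝ → Fin n) (hφ : MeasurePreserving φ glP (glMu n))
    (F : Fin n × Fin n → ℝ) (R : ℝ)
    (hR : ∀ S T : Finset (Fin n), |∑ w ∈ S ×ˢ T, F w| ≤ R) (S T : Set ℝ)
    (hS : S ⊆ Set.Icc 0 1) (hT : T ⊆ Set.Icc 0 1) :
    |∫ p in S ×ˢ T, F (φ p.1, φ p.2)| ≤ R / (n:ℝ) ^ 2 := by
  have hn : (0:ℝ) < n := by exact_mod_cast Nat.pos_of_ne_zero (NeZero.ne n)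
  have hle : ∀ S : Set ℝ, S ⊆ Set.Icc 0 1 → volume.restrict S ≤ glP := fun S hS =>
    Measure.restrict_mono hS le_rfl
  have hfin : ∀ S : Set ℝ, S ⊆ Set.Icc 0 1 → IsFiniteMeasure (volume.restrict S) := fun S hS =>
    ⟨lt_of_le_of_lt (hle S hS _) (measure_lt_top glP _)⟩
  have := hfin S hS
  have := hfin T hT
  have hw : ∀ S : Set ℝ, S ⊆ Set.Icc 0 1 → ∀ v, ((volume.restrict S).map φ).real {v} ≤ 1 / n := by
    intro S hS v
    rw [← glMu_singleton n v]
    apply ENNReal.toReal_mono (measure_ne_top _ _)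
    rw [← hφ.map_eq]
    exact Measure.map_mono (hle S hS) hφ.measurable _
  have h1 : ∫ p in S ×ˢ T, F (φ p.1, φ p.2) =
      ∫ w, F w ∂(((volume.restrict S).map φ).prod ((volume.restrict T).map φ)) := by
    rw [Measure.map_prod_map _ _ hφ.measurable hφ.measurable, integral_map]
    · rw [Measure.prod_restrict, ← Measure.volume_eq_prod]
      rfl
    · exact (hφ.measurable.prodMap hφ.measurable).aemeasurable
    · exact (measurable_of_finite F).aestronglyMeasurable
  set s : Fin n → ℝ := fun v => ((volume.restrict S).map φ).real {v} with hs
  set t : Fin n → ℝ := fun v => ((volume.restrict T).map φ).real {v} with ht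
  have h2 : ∫ p in S ×ˢ T, F (φ p.1, φ p.2) = ∑ u, s u * ∑ v, t v * F (u, v) := by
    rw [h1, integral_fintype Integrable.of_finite, Fintype.sum_prod_type]
    refine Finset.sum_congr rfl fun u _ => ?_
    rw [Finset.mul_sum]
    refine Finset.sum_congr rfl fun v _ => ?_
    have : ({(u, v)} : Set (Fin n × Fin n)) = {u} ×ˢ {v} := by simp
    rw [this, measureReal_prod_prod, smul_eq_mul]
    simp only [hs, ht]; ring
  rw [h2]
  have h3 : ∀ A : Finset (Fin n), |∑ u ∈ A, ∑ v, t v * F (u, v)| ≤ 1 / n * R := by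
    intro A
    rw [Finset.sum_comm]
    simp only [← Finset.mul_sum]
    refine glComb t _ (1/n) R (fun _ => measureReal_nonneg) (hw T hT) (by positivity) ?_
    intro B
    have := hR A B
    rw [Finset.sum_product_right] at this
    exact this
  have h4 := glComb s _ (1/n) (1 / n * R) (fun _ => measureReal_nonneg) (hw S hS) (by positivity) h3
  refine h4.trans (le_of_eq ?_)
  field_simp

/-- the rearrangement of `[0,1]` induced by a permutation -/
def glTau {n : ℕ} [NeZero n] (π : Equiv.Perm (Fin n)) (x : ℝ) : ℝ :=
  x + (if x ∈ Set.Ioc (0:ℝ) 1 then (((π (glVtx n x) : ℕ) : ℝ) - ((glVtx n x : ℕ) : ℝ)) / n else 0)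

lemma glTau_ceil {n : ℕ} [NeZero n] (π : Equiv.Perm (Fin n)) {x : ℝ} (hx : x ∈ Set.Ioc (0:ℝ) 1) :
    ⌈(n:ℝ) * glTau π x⌉ = ((π (glVtx n x) : ℕ) : ℤ) + 1 := by
  have hn : (n:ℝ) ≠ 0 := by exact_mod_cast (NeZero.ne n)
  have : (n:ℝ) * glTau π x = (n:ℝ) * x + (((π (glVtx n x) : ℕ) - (glVtx n x : ℕ) : ℤ) : ℝ) := by
    unfold glTau; rw [if_pos hx]; push_cast; field_simp
  rw [this, Int.ceil_add_intCast, glVtx_ceil n hx]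
  ring

lemma glTau_mem {n : ℕ} [NeZero n] (π : Equiv.Perm (Fin n)) {x : ℝ} (hx : x ∈ Set.Ioc (0:ℝ) 1) :
    glTau π x ∈ Set.Ioc (0:ℝ) 1 := glMem_Ioc_of_ceil n _ (glTau_ceil π hx)

lemma glTau_vtx {n : ℕ} [NeZero n] (π : Equiv.Perm (Fin n)) {x : ℝ} (hx : x ∈ Set.Ioc (0:ℝ) 1) :
    glVtx n (glTau π x) = π (glVtx n x) :=
  glVtx_eq_of_ceil n (glTau_mem π hx) _ (glTau_ceil π hx)

lemma glTau_meas {n : ℕ} [NeZero n] (π : Equiv.Perm (Fin n)) : Measurable (glTau π) := by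
  unfold glTau
  refine measurable_id.add (Measurable.ite measurableSet_Ioc ?_ measurable_const)
  have : Measurable (fun v : Fin n => (((π v : ℕ) : ℝ) - ((v : ℕ) : ℝ)) / n) :=
    measurable_of_finite _
  exact this.comp (glVtx_meas n)

lemma glSplit (n : ℕ) [NeZero n] (A : Set ℝ) (hA : MeasurableSet A) :
    glP A = ∑ v : Fin n, volume (A ∩ (Set.Ioc 0 1 ∩ glVtx n ⁻¹' {v})) := by
  have h1 : glP A = volume (A ∩ Set.Ioc 0 1) := by
    rw [glP, Measure.restrict_congr_set Ioc_ae_eq_Icc.symm, Measure.restrict_apply hA]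
  have h2 := sum_measure_preimage_singleton (μ := volume.restrict (A ∩ Set.Ioc (0:ℝ) 1))
    (Finset.univ : Finset (Fin n)) (f := glVtx n)
    (fun v _ => glVtx_meas n (measurableSet_singleton v))
  simp only [Finset.coe_univ, Set.preimage_univ, Measure.restrict_apply_univ] at h2
  rw [h1, ← h2]
  refine Finset.sum_congr rfl fun v _ => ?_
  rw [Measure.restrict_apply (glVtx_meas n (measurableSet_singleton v))]
  congr 1
  ext x; simp; tauto

lemma glTau_mp {n : ℕ} [NeZero n] (π : Equiv.Perm (Fin n)) : IsMPSelf (glTau π) := by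
  have hn : (0:ℝ) < n := by exact_mod_cast Nat.pos_of_ne_zero (NeZero.ne n)
  refine ⟨⟨glTau_meas π, ?_⟩, ?_⟩
  · ext A hA
    rw [Measure.map_apply (glTau_meas π) hA]
    change glP _ = glP _
    rw [glSplit n A hA, glSplit n _ (glTau_meas π hA),
      ← Equiv.sum_comp π (fun v => volume (A ∩ (Set.Ioc 0 1 ∩ glVtx n ⁻¹' {v})))]
    refine Finset.sum_congr rfl fun v _ => ?_
    rw [← measure_preimage_add_right volume ((((π v : ℕ) : ℝ) - ((v : ℕ) : ℝ)) / n)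
      (A ∩ (Set.Ioc 0 1 ∩ glVtx n ⁻¹' {π v}))]
    congr 1
    ext x
    simp only [Set.mem_inter_iff, Set.mem_preimage, Set.mem_singleton_iff]
    constructor
    · rintro ⟨h1, h2, h3⟩
      have e : glTau π x = x + (((π v : ℕ) : ℝ) - ((v : ℕ) : ℝ)) / n := by
        unfold glTau; rw [if_pos h2, h3]
      rw [← e]
      refine ⟨h1, glTau_mem π h2, ?_⟩
      rw [glTau_vtx π h2, h3]
    · rintro ⟨h1, h2, h3⟩
      have hc := glVtx_ceil n h2
      rw [h3] at hc
      have e1 : (n:ℝ) * (x + (((π v : ℕ) : ℝ) - ((v : ℕ) : ℝ)) / n)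
          = (n:ℝ) * x + (((π v : ℕ) - (v : ℕ) : ℤ) : ℝ) := by
        push_cast; field_simp
      rw [e1, Int.ceil_add_intCast] at hc
      have hc' : ⌈(n:ℝ) * x⌉ = ((v : ℕ) : ℤ) + 1 := by linarith
      have hx := glMem_Ioc_of_ceil n v hc'
      have hv := glVtx_eq_of_ceil n hx v hc'
      have e : glTau π x = x + (((π v : ℕ) : ℝ) - ((v : ℕ) : ℝ)) / n := by
        unfold glTau; rw [if_pos hx, hv]
      exact ⟨by rw [e]; exact h1, hx, hv⟩
  · intro x hx
    rcases hx.1.lt_or_eq with h | h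
    · exact Set.Ioc_subset_Icc_self (glTau_mem π ⟨h, hx.2⟩)
    · subst h; simp [glTau]

lemma glPhi_mp {n : ℕ} [NeZero n] (π : Equiv.Perm (Fin n)) :
    MeasurePreserving (fun x => π (glVtx n x)) glP (glMu n) := by
  have h1 : MeasurePreserving (glVtx n) glP (glMu n) := ⟨glVtx_meas n, rfl⟩
  have h2 := h1.comp (glTau_mp π).1
  have hm : Measurable (fun x => π (glVtx n x)) := (measurable_of_finite π).comp (glVtx_meas n)
  refine ⟨hm, ?_⟩
  rw [← h2.map_eq]
  apply Measure.map_congr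
  filter_upwards [glP_ae_Ioc] with x hx
  exact (glTau_vtx π hx).symm


lemma binEnt_eq (x : ℝ) : binEnt x = Real.binEntropy x / Real.log 2 := by
  unfold binEnt Real.binEntropy Real.logb
  rw [Real.log_inv, Real.log_inv]
  ring

lemma binEnt_cont : Continuous binEnt := by
  have : binEnt = fun x => Real.binEntropy x / Real.log 2 := funext binEnt_eq
  rw [this]
  exact Real.binEntropy_continuous.div_const _

lemma binEnt_mem {x : ℝ} (hx : x ∈ Set.Icc (0:ℝ) 1) : binEnt x ∈ Set.Icc (0:ℝ) 1 := by
  have hl2 : 0 < Real.log 2 := Real.log_pos (by norm_num)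
  rw [binEnt_eq]
  exact ⟨div_nonneg (Real.binEntropy_nonneg hx.1 hx.2) hl2.le,
    (div_le_one hl2).2 Real.binEntropy_le_log_two⟩

lemma glDCT {α : Type*} [MeasurableSpace α] (μ : Measure α) [IsFiniteMeasure μ]
    (F : ℕ → α → ℝ) (f : α → ℝ) (C : ℝ) (hm : ∀ k, Measurable (F k)) (hb : ∀ k a, |F k a| ≤ C)
    (hl : ∀ᵐ a ∂μ, Tendsto (fun k => F k a) atTop (nhds (f a))) :
    Tendsto (fun k => ∫ a, F k a ∂μ) atTop (nhds (∫ a, f a ∂μ)) :=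
  tendsto_integral_of_dominated_convergence (fun _ => C)
    (fun k => (hm k).aestronglyMeasurable) (integrable_const C)
    (fun k => Eventually.of_forall fun a => hb k a) hl

lemma glInteg {α : Type*} [MeasurableSpace α] (μ : Measure α) [IsFiniteMeasure μ]
    (f : α → ℝ) (C : ℝ) (hm : Measurable f) (hb : ∀ a, |f a| ≤ C) : Integrable f μ :=
  Integrable.of_bound hm.aestronglyMeasurable C (Eventually.of_forall hb)

lemma glL1lim {α : Type*} [MeasurableSpace α] (μ : Measure α) [IsProbabilityMeasure μ]
    (w : ℕ → α → ℝ) (hm : ∀ j, Measurable (w j)) (hw : ∀ j a, w j a ∈ Set.Icc (0:ℝ) 1)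
    (he : ∀ i j, i ≤ j → ∫ a, (w j a - w i a) ^ 2 ∂μ = ∫ a, w j a ^ 2 ∂μ - ∫ a, w i a ^ 2 ∂μ) :
    ∃ ns : ℕ → ℕ, StrictMono ns ∧ ∃ g : α → ℝ,
      ∀ᵐ a ∂μ, Tendsto (fun i => w (ns i) a) atTop (nhds (g a)) := by
  set e : ℕ → ℝ := fun j => ∫ a, w j a ^ 2 ∂μ with hedef
  have hint : ∀ j, Integrable (w j) μ := fun j => glInteg μ _ 1 (hm j)
    (fun a => abs_le.2 ⟨by linarith [(hw j a).1], (hw j a).2⟩)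
  have hmono : Monotone e := by
    intro i j hij
    have := he i j hij
    have h0 : 0 ≤ ∫ a, (w j a - w i a) ^ 2 ∂μ := integral_nonneg fun a => sq_nonneg _
    simp only [hedef]; linarith
  have hsq : ∀ j, Integrable (fun a => w j a ^ 2) μ := fun j => glInteg μ _ 1 ((hm j).pow_const 2)
    (fun a => by
      rw [abs_of_nonneg (sq_nonneg _)]
      exact pow_le_one₀ (hw j a).1 (hw j a).2)
  have hbdd : BddAbove (Set.range e) := by
    refine ⟨1, ?_⟩
    rintro _ ⟨j, rfl⟩
    calc e j ≤ ∫ a, (1:ℝ) ∂μ := integral_mono (hsq j) (integrable_const _)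
          (fun a => pow_le_one₀ (hw j a).1 (hw j a).2)
      _ = 1 := by simp
  have hcau : CauchySeq e := (tendsto_atTop_ciSup hmono hbdd).cauchySeq
  set f : ℕ → (α →₁[μ] ℝ) := fun j => (hint j).toL1 (w j) with hf
  have hfc : CauchySeq f := by
    rw [Metric.cauchySeq_iff'] at hcau ⊢
    intro ε hε
    obtain ⟨N, hN⟩ := hcau (ε ^ 2 / 2) (by positivity)
    refine ⟨N, fun j hj => ?_⟩
    have h1 := hN j hj
    rw [Real.dist_eq, abs_of_nonneg (sub_nonneg.2 (hmono hj)), ← he N j hj] at h1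
    rw [dist_eq_norm, hf]
    simp only
    rw [← Integrable.toL1_sub, L1.norm_of_fun_eq_integral_norm]
    have hsd : Integrable (fun a => (w j a - w N a) ^ 2) μ :=
      glInteg μ _ 1 (((hm j).sub (hm N)).pow_const 2) (fun a => by
        rw [abs_of_nonneg (sq_nonneg _), sq_le_one_iff_abs_le_one, abs_le]
        constructor <;> linarith [(hw j a).1, (hw j a).2, (hw N a).1, (hw N a).2])
    calc ∫ a, ‖(w j - w N) a‖ ∂μ ≤ ∫ a, (ε / 2 + (w j a - w N a) ^ 2 / (2 * ε)) ∂μ := by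
          apply integral_mono ((hint j).sub (hint N)).norm
            ((integrable_const _).add (hsd.div_const _))
          intro a
          change |w j a - w N a| ≤ ε / 2 + (w j a - w N a) ^ 2 / (2 * ε)
          rw [← sq_abs]
          have : ε / 2 + |w j a - w N a| ^ 2 / (2 * ε) - |w j a - w N a|
              = (ε - |w j a - w N a|) ^ 2 / (2 * ε) := by field_simp; ring
          have h0 : 0 ≤ (ε - |w j a - w N a|) ^ 2 / (2 * ε) := by positivity
          linarith
      _ = ε / 2 + (∫ a, (w j a - w N a) ^ 2 ∂μ) / (2 * ε) := by
          rw [integral_add (integrable_const _) (hsd.div_const _),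
            integral_div (2 * ε) (fun a => (w j a - w N a) ^ 2)]
          simp
      _ < ε / 2 + (ε ^ 2 / 2) / (2 * ε) := by gcongr
      _ ≤ ε := by
          have : (ε ^ 2 / 2) / (2 * ε) = ε / 4 := by field_simp; norm_num
          rw [this]; linarith
  obtain ⟨g, hg⟩ := cauchySeq_tendsto_of_complete hfc
  obtain ⟨ns, hns, hlim⟩ := (tendstoInMeasure_of_tendsto_Lp hg).exists_seq_tendsto_ae
  refine ⟨ns, hns, g, ?_⟩
  have hae : ∀ᵐ a ∂μ, ∀ i, f (ns i) a = w (ns i) a :=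
    ae_all_iff.2 fun i => (hint (ns i)).coeFn_toL1
  filter_upwards [hlim, hae] with a h1 h2
  simpa only [h2] using h1

lemma glThr (f : ℝ → ℕ) (hf : MonotoneOn f (Set.Ioc 0 1)) (a : ℕ) :
    ∃ s ∈ Set.Icc (0:ℝ) 1, ∀ x ∈ Set.Ioc (0:ℝ) 1, (x < s → f x < a) ∧ (s < x → a ≤ f x) := by
  set A : Set ℝ := {0} ∪ {x | x ∈ Set.Ioc (0:ℝ) 1 ∧ f x < a} with hA
  have h0 : (0:ℝ) ∈ A := Or.inl rfl
  have hbd : ∀ x ∈ A, x ≤ 1 := by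
    rintro x (rfl | hx)
    · norm_num
    · exact hx.1.2
  have hB : BddAbove A := ⟨1, hbd⟩
  refine ⟨sSup A, ⟨le_csSup hB h0, csSup_le ⟨0, h0⟩ hbd⟩, fun x hx => ⟨fun h => ?_, fun h => ?_⟩⟩
  · obtain ⟨y, hy, hxy⟩ := (lt_csSup_iff hB ⟨0, h0⟩).1 h
    rcases hy with rfl | hy
    · exact absurd hxy (not_lt.2 hx.1.le)
    · exact (hf hx hy.1 hxy.le).trans_lt hy.2
  · by_contra hc
    exact absurd (le_csSup hB (Or.inr ⟨hx, not_le.1 hc⟩)) (not_le.2 h)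

open Classical in
/-- limit colouring from thresholds -/
def glColLim (s : ℕ × ℕ → unitInterval) (j : ℕ) (x : ℝ) : ℕ :=
  ((Finset.Icc 1 (4 ^ j)).filter (fun a => (s (j, a) : ℝ) < x)).card

lemma glColLim_meas (s : ℕ × ℕ → unitInterval) (j : ℕ) : Measurable (glColLim s j) := by
  classical
  unfold glColLim
  simp only [Finset.card_filter]
  refine Finset.measurable_sum _ fun a _ => ?_
  exact Measurable.ite measurableSet_Ioi measurable_const measurable_const

lemma glEntropy_eq (W : ℝ → ℝ → ℝ) (hW : IsGraphon W) :
    graphonEnt W = ∫ p, binEnt (W p.1 p.2) ∂(glP.prod glP) := by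
  have hi : Integrable (fun p : ℝ × ℝ => binEnt (W p.1 p.2)) (glP.prod glP) :=
    glInteg _ _ 1 (binEnt_cont.measurable.comp hW.2.1) (fun p => by
      have := binEnt_mem (hW.2.2 p.1 p.2)
      exact abs_le.2 ⟨by linarith [this.1], this.2⟩)
  rw [integral_prod _ hi]
  rfl

lemma glLimit (c : ℝ) (col : ℕ → ℕ → ℝ → ℕ) (D : ℕ → ℕ → ℕ × ℕ → ℝ) (r : ℕ → ℕ → ℝ)
    (hcm : ∀ k j, Measurable (col k j)) (hclt : ∀ k j x, col k j x < 4 ^ j)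
    (hcmono : ∀ k j, j ≤ k → MonotoneOn (col k j) (Set.Ioc 0 1))
    (hD : ∀ k j p, D k j p ∈ Set.Icc (0:ℝ) 1) (hDs : ∀ k j p, D k j p.swap = D k j p)
    (hen : ∀ k i j, i ≤ j →
      ∫ p, (D k j (col k j p.1, col k j p.2) - D k i (col k i p.1, col k i p.2)) ^ 2 ∂(glP.prod glP)
      = ∫ p, D k j (col k j p.1, col k j p.2) ^ 2 ∂(glP.prod glP)
        - ∫ p, D k i (col k i p.1, col k i p.2) ^ 2 ∂(glP.prod glP))
    (hr : ∀ k j, r k j ∈ Set.Icc (0:ℝ) 1)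
    (hrs : ∀ k J, ∑ j ∈ Finset.range J, r k j ^ 2 ≤ 1)
    (hE : ∀ k j : ℕ, j ≤ k → c - 1 / ((k:ℝ) + 1) ≤
      ∫ p, binEnt (D k j (col k j p.1, col k j p.2)) ∂(glP.prod glP)) :
    ∃ W : ℝ → ℝ → ℝ, IsGraphon W ∧ c ≤ graphonEnt W ∧ ∃ ψ : ℕ → ℕ, StrictMono ψ ∧
      ∀ η : ℝ, 0 < η → ∃ j, ∀ᶠ k in atTop,
        r (ψ k) j + ∫ p, |D (ψ k) j (col (ψ k) j p.1, col (ψ k) j p.2) - W p.1 p.2| ∂(glP.prod glP)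
          < η := by
  classical
  have hthr : ∀ (k : ℕ) (q : ℕ × ℕ), ∃ s : unitInterval, q.1 ≤ k → ∀ x ∈ Set.Ioc (0:ℝ) 1,
      (x < (s:ℝ) → col k q.1 x < q.2) ∧ ((s:ℝ) < x → q.2 ≤ col k q.1 x) := by
    intro k q
    by_cases h : q.1 ≤ k
    · obtain ⟨s, hs, hs'⟩ := glThr (col k q.1) (hcmono k q.1 h) q.2
      exact ⟨⟨s, hs⟩, fun _ => hs'⟩
    · exact ⟨0, fun h' => absurd h' h⟩
  choose s hs using hthr
  obtain ⟨⟨s', D', r'⟩, ψ, hψ, hlim⟩ := CompactSpace.tendsto_subseq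
    (fun k => ((s k, (fun q : ℕ × (ℕ × ℕ) => (⟨D k q.1 q.2, hD k q.1 q.2⟩ : unitInterval)),
      (fun j => (⟨r k j, hr k j⟩ : unitInterval))) :
      (ℕ × ℕ → unitInterval) × (ℕ × (ℕ × ℕ) → unitInterval) × (ℕ → unitInterval)))
  rw [Prod.tendsto_iff] at hlim
  obtain ⟨hls, hlim⟩ := hlim
  rw [Prod.tendsto_iff] at hlim
  obtain ⟨hlD, hlr⟩ := hlim
  rw [tendsto_pi_nhds] at hls hlD hlr
  have hls' : ∀ q, Tendsto (fun k => ((s (ψ k) q : unitInterval) : ℝ)) atTop (nhds (s' q)) :=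
    fun q => (continuous_subtype_val.tendsto _).comp (hls q)
  have hlD' : ∀ j p, Tendsto (fun k => D (ψ k) j p) atTop (nhds (D' (j, p) : ℝ)) :=
    fun j p => (continuous_subtype_val.tendsto _).comp (hlD (j, p))
  have hlr' : ∀ j, Tendsto (fun k => r (ψ k) j) atTop (nhds (r' j : ℝ)) :=
    fun j => (continuous_subtype_val.tendsto _).comp (hlr j)
  clear hls hlD hlr
  set w : ℕ → ℝ × ℝ → ℝ := fun j p => D' (j, (glColLim s' j p.1, glColLim s' j p.2)) with hwdef
  have hwm : ∀ j, Measurable (w j) := by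
    intro j
    have h1 : Measurable (fun q : ℕ × ℕ => ((D' (j, q) : unitInterval) : ℝ)) :=
      measurable_of_countable _
    exact h1.comp (((glColLim_meas s' j).comp measurable_fst).prodMk
      ((glColLim_meas s' j).comp measurable_snd))
  have hw01 : ∀ j p, w j p ∈ Set.Icc (0:ℝ) 1 := fun j p => (D' _).2
  have hUm : ∀ k j, Measurable (fun p : ℝ × ℝ => D k j (col k j p.1, col k j p.2)) := by
    intro k j
    have h1 : Measurable (D k j) := measurable_of_countable _
    exact h1.comp (((hcm k j).comp measurable_fst).prodMk ((hcm k j).comp measurable_snd))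
  have hD's : ∀ j p, D' (j, p.swap) = D' (j, p) := by
    intro j p
    apply Subtype.ext
    refine tendsto_nhds_unique (hlD' j p.swap) ?_
    simp only [hDs]
    exact hlD' j p
  -- pointwise convergence of colourings
  have hcol : ∀ᵐ x ∂glP, ∀ j, ∀ᶠ k in atTop, col (ψ k) j x = glColLim s' j x := by
    have hne : ∀ᵐ x ∂glP, ∀ q, x ≠ (s' q : ℝ) := by
      rw [ae_all_iff]
      intro q
      apply ae_restrict_of_ae
      simp [ae_iff]
    filter_upwards [glP_ae_Ioc, hne] with x hx hxne j
    have h1 : ∀ᶠ k in atTop, ∀ a ∈ Finset.Icc 1 (4 ^ j),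
        (a ≤ col (ψ k) j x ↔ (s' (j, a) : ℝ) < x) := by
      rw [Filter.eventually_all_finset]
      intro a _
      rcases lt_or_gt_of_ne (hxne (j, a)) with h | h
      · filter_upwards [(hls' (j, a)).eventually (lt_mem_nhds h), eventually_ge_atTop j]
          with k hk hjk
        have h2 := (hs (ψ k) (j, a) (hjk.trans (hψ.id_le k)) x hx).1 hk
        exact ⟨fun h3 => absurd h2 (not_lt.2 h3), fun h3 => absurd h3 (not_lt.2 h.le)⟩
      · filter_upwards [(hls' (j, a)).eventually (gt_mem_nhds h), eventually_ge_atTop j]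
          with k hk hjk
        have h2 := (hs (ψ k) (j, a) (hjk.trans (hψ.id_le k)) x hx).2 hk
        exact ⟨fun _ => h, fun _ => h2⟩
    filter_upwards [h1] with k hk
    unfold glColLim
    rw [← Finset.filter_congr hk]
    have : (Finset.Icc 1 (4 ^ j)).filter (fun a => a ≤ col (ψ k) j x)
        = Finset.Icc 1 (col (ψ k) j x) := by
      ext a
      have := hclt (ψ k) j x
      simp only [Finset.mem_filter, Finset.mem_Icc]
      omega
    rw [this]; simp
  have hU : ∀ᵐ p ∂(glP.prod glP), ∀ j,
      Tendsto (fun k => D (ψ k) j (col (ψ k) j p.1, col (ψ k) j p.2)) atTop (nhds (w j p)) := by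
    filter_upwards [Measure.quasiMeasurePreserving_fst.ae hcol,
      Measure.quasiMeasurePreserving_snd.ae hcol] with p hp1 hp2 j
    refine (hlD' j (glColLim s' j p.1, glColLim s' j p.2)).congr' ?_
    filter_upwards [hp1 j, hp2 j] with k h1 h2
    rw [h1, h2]
  -- energies
  have habs : ∀ {x : ℝ}, x ∈ Set.Icc (0:ℝ) 1 → |x| ≤ 1 := fun {x} hx =>
    abs_le.2 ⟨by linarith [hx.1], hx.2⟩
  have habs2 : ∀ {x y : ℝ}, x ∈ Set.Icc (0:ℝ) 1 → y ∈ Set.Icc (0:ℝ) 1 → |x - y| ≤ 1 :=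
    fun {x y} hx hy => abs_le.2 ⟨by linarith [hx.1, hy.2], by linarith [hx.2, hy.1]⟩
  have hsq : ∀ {x : ℝ}, |x| ≤ 1 → |x ^ 2| ≤ 1 := fun {x} hx => by
    rw [abs_pow]; exact pow_le_one₀ (abs_nonneg x) hx
  have hwe : ∀ i j, i ≤ j → ∫ p, (w j p - w i p) ^ 2 ∂(glP.prod glP)
      = ∫ p, w j p ^ 2 ∂(glP.prod glP) - ∫ p, w i p ^ 2 ∂(glP.prod glP) := by
    intro i j hij
    have t1 := glDCT (glP.prod glP)
      (fun k p => (D (ψ k) j (col (ψ k) j p.1, col (ψ k) j p.2)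
        - D (ψ k) i (col (ψ k) i p.1, col (ψ k) i p.2)) ^ 2) (fun p => (w j p - w i p) ^ 2) 1
      (fun k => ((hUm _ _).sub (hUm _ _)).pow_const 2)
      (fun k p => hsq (habs2 (hD _ _ _) (hD _ _ _)))
      (by filter_upwards [hU] with p hp; exact ((hp j).sub (hp i)).pow 2)
    have t2 := fun j => glDCT (glP.prod glP)
      (fun k p => D (ψ k) j (col (ψ k) j p.1, col (ψ k) j p.2) ^ 2) (fun p => w j p ^ 2) 1
      (fun k => (hUm _ _).pow_const 2) (fun k p => hsq (habs (hD _ _ _)))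
      (by filter_upwards [hU] with p hp; exact (hp j).pow 2)
    refine tendsto_nhds_unique t1 ?_
    simp only [hen _ i j hij]
    exact (t2 j).sub (t2 i)
  obtain ⟨ns, hns, g, hg⟩ := glL1lim (glP.prod glP) w hwm hw01 hwe
  set W : ℝ → ℝ → ℝ := fun x y => max 0 (min 1 (limsup (fun i => w (ns i) (x, y)) atTop)) with hWdef
  have hWm : Measurable (Function.uncurry W) := by
    have : Measurable (fun p : ℝ × ℝ => limsup (fun i => w (ns i) p) atTop) :=
      Measurable.limsup (fun i => hwm (ns i))
    exact measurable_const.max (measurable_const.min this)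
  have hW01 : ∀ x y, W x y ∈ Set.Icc (0:ℝ) 1 := fun x y =>
    ⟨le_max_left _ _, max_le zero_le_one (min_le_left _ _)⟩
  have hWlim : ∀ᵐ p ∂(glP.prod glP), Tendsto (fun i => w (ns i) p) atTop (nhds (W p.1 p.2)) := by
    filter_upwards [hg] with p hp
    have hgp : g p ∈ Set.Icc (0:ℝ) 1 :=
      isClosed_Icc.mem_of_tendsto hp (Eventually.of_forall fun i => hw01 _ _)
    have : W p.1 p.2 = g p := by
      simp only [hWdef, Prod.mk.eta]
      rw [hp.limsup_eq, min_eq_right hgp.2, max_eq_right hgp.1]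
    rw [this]; exact hp
  have hWg : IsGraphon W := by
    refine ⟨?_, hWm, hW01⟩
    intro x y
    have : ∀ j, w j (x, y) = w j (y, x) := by
      intro j
      simp only [hwdef]
      rw [← hD's j (glColLim s' j x, glColLim s' j y)]
      rfl
    simp only [hWdef, this]
  refine ⟨W, hWg, ?_, ψ, hψ, ?_⟩
  · rw [glEntropy_eq W hWg]
    have t1 : ∀ j, c ≤ ∫ p, binEnt (w j p) ∂(glP.prod glP) := by
      intro j
      have t := glDCT (glP.prod glP)
        (fun k p => binEnt (D (ψ k) j (col (ψ k) j p.1, col (ψ k) j p.2)))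
        (fun p => binEnt (w j p)) 1
        (fun k => binEnt_cont.measurable.comp (hUm _ _))
        (fun k p => habs (binEnt_mem (hD _ _ _)))
        (by filter_upwards [hU] with p hp; exact (binEnt_cont.tendsto _).comp (hp j))
      have t' : Tendsto (fun k => c - 1 / ((ψ k : ℝ) + 1)) atTop (nhds (c - 0)) :=
        tendsto_const_nhds.sub (tendsto_one_div_add_atTop_nhds_zero_nat.comp hψ.tendsto_atTop)
      rw [sub_zero] at t'
      refine le_of_tendsto_of_tendsto t' t ?_
      filter_upwards [eventually_ge_atTop j] with k hk
      exact hE (ψ k) j (hk.trans (hψ.id_le k))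
    have t := glDCT (glP.prod glP)
      (fun i p => binEnt (w (ns i) p)) (fun p => binEnt (W p.1 p.2)) 1
      (fun k => binEnt_cont.measurable.comp (hwm _))
      (fun k p => habs (binEnt_mem (hw01 _ _)))
      (by filter_upwards [hWlim] with p hp; exact (binEnt_cont.tendsto _).comp hp)
    exact ge_of_tendsto' t (fun i => t1 (ns i))
  · intro η hη
    have hr0 : Tendsto (fun j => (r' j : ℝ)) atTop (nhds 0) := by
      have hsum : ∀ J, ∑ j ∈ Finset.range J, (r' j : ℝ) ^ 2 ≤ 1 := by
        intro J
        exact le_of_tendsto' (tendsto_finsetSum _ fun j _ => (hlr' j).pow 2) (fun k => hrs (ψ k) J)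
      have h1 := (summable_of_sum_range_le (fun j => sq_nonneg (r' j : ℝ)) hsum).tendsto_atTop_zero
      have h2 := (Real.continuous_sqrt.tendsto 0).comp h1
      rw [Real.sqrt_zero] at h2
      refine h2.congr fun j => ?_
      exact Real.sqrt_sq (r' j).2.1
    have hWm' : Measurable (fun p : ℝ × ℝ => W p.1 p.2) := hWm
    have t1 := glDCT (glP.prod glP)
      (fun i p => |w (ns i) p - W p.1 p.2|) (fun _ => 0) 1
      (fun k => ((hwm _).sub hWm').abs)
      (fun k p => by rw [abs_abs]; exact habs2 (hw01 _ _) (hW01 _ _))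
      (by
        filter_upwards [hWlim] with p hp
        have := (hp.sub_const (W p.1 p.2)).abs
        simpa using this)
    rw [integral_zero] at t1
    have t2 := (hr0.comp hns.tendsto_atTop).add t1
    rw [add_zero] at t2
    obtain ⟨i, hi⟩ := (t2.eventually (gt_mem_nhds hη)).exists
    refine ⟨ns i, ?_⟩
    have t3 := glDCT (glP.prod glP)
      (fun k p => |D (ψ k) (ns i) (col (ψ k) (ns i) p.1, col (ψ k) (ns i) p.2) - W p.1 p.2|)
      (fun p => |w (ns i) p - W p.1 p.2|) 1
      (fun k => ((hUm _ _).sub hWm').abs)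
      (fun k p => by rw [abs_abs]; exact habs2 (hD _ _ _) (hW01 _ _))
      (by filter_upwards [hU] with p hp; exact ((hp (ns i)).sub_const _).abs)
    exact ((hlr' (ns i)).add t3).eventually (gt_mem_nhds hi)


lemma glPP_eq : glP.prod glP = volume.restrict (Set.Icc (0:ℝ) 1 ×ˢ Set.Icc (0:ℝ) 1) := by
  rw [glP, Measure.prod_restrict, ← Measure.volume_eq_prod]

lemma glRect_le {S T : Set ℝ} (hS : S ⊆ Set.Icc 0 1) (hT : T ⊆ Set.Icc 0 1) :
    volume.restrict (S ×ˢ T) ≤ glP.prod glP := by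
  rw [glPP_eq]
  exact Measure.restrict_mono (Set.prod_mono hS hT) le_rfl

lemma glCut_le (U : ℝ → ℝ → ℝ) (B : ℝ)
    (h : ∀ S T : Set ℝ, S ⊆ Set.Icc 0 1 → T ⊆ Set.Icc 0 1 → |∫ p in S ×ˢ T, U p.1 p.2| ≤ B) :
    cutNorm U ≤ B := by
  apply csSup_le
  · exact ⟨_, ∅, ∅, MeasurableSet.empty, MeasurableSet.empty, by simp, by simp, rfl⟩
  · rintro _ ⟨S, T, -, -, hS, hT, rfl⟩
    exact h S T hS hT

lemma glCut_nonneg (U : ℝ → ℝ → ℝ) : 0 ≤ cutNorm U := by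
  apply Real.sSup_nonneg
  rintro _ ⟨S, T, -, -, hS, hT, rfl⟩
  exact abs_nonneg _

lemma glLe_cut (U : ℝ → ℝ → ℝ) (C : ℝ) (hb : ∀ x y, |U x y| ≤ C) (S T : Set ℝ)
    (hSm : MeasurableSet S) (hTm : MeasurableSet T)
    (hS : S ⊆ Set.Icc 0 1) (hT : T ⊆ Set.Icc 0 1) :
    |∫ p in S ×ˢ T, U p.1 p.2| ≤ cutNorm U := by
  have hC : 0 ≤ C := (abs_nonneg _).trans (hb 0 0)
  apply le_csSup
  · refine ⟨C, ?_⟩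
    rintro _ ⟨S, T, -, -, hS, hT, rfl⟩
    have hle := glRect_le hS hT
    have : IsFiniteMeasure (volume.restrict (S ×ˢ T)) :=
      ⟨lt_of_le_of_lt (hle _) (measure_lt_top (glP.prod glP) _)⟩
    have h1 := norm_integral_le_of_norm_le_const (μ := volume.restrict (S ×ˢ T))
      (f := fun p : ℝ × ℝ => U p.1 p.2) (C := C) (Eventually.of_forall fun p => hb p.1 p.2)
    rw [Real.norm_eq_abs] at h1
    refine h1.trans (mul_le_of_le_one_right hC ?_)
    have h2 : volume.restrict (S ×ˢ T) Set.univ ≤ 1 := by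
      rw [← measure_univ (μ := glP.prod glP)]; exact hle _
    exact ENNReal.toReal_le_of_le_ofReal zero_le_one (by simpa using h2)
  · exact ⟨S, T, hSm, hTm, hS, hT, rfl⟩

lemma glDelta_le (W₁ W₂ : ℝ → ℝ → ℝ) (σ₁ σ₂ : ℝ → ℝ) (h₁ : IsMPSelf σ₁) (h₂ : IsMPSelf σ₂) :
    deltaCut W₁ W₂ ≤ cutNorm (fun x y => W₁ (σ₁ x) (σ₁ y) - W₂ (σ₂ x) (σ₂ y)) := by
  apply csInf_le
  · refine ⟨0, ?_⟩
    rintro _ ⟨_, _, _, _, rfl⟩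
    exact glCut_nonneg _
  · exact ⟨σ₁, σ₂, h₁, h₂, rfl⟩

lemma glDelta_nonneg (W₁ W₂ : ℝ → ℝ → ℝ) : 0 ≤ deltaCut W₁ W₂ := by
  apply Real.sInf_nonneg
  rintro _ ⟨_, _, _, _, rfl⟩
  exact glCut_nonneg _

lemma glId_mp : IsMPSelf id := ⟨MeasurePreserving.id _, fun _ h => h⟩

lemma glAbs_sub {a b : ℝ} (ha : a ∈ Set.Icc (0:ℝ) 1) (hb : b ∈ Set.Icc (0:ℝ) 1) : |a - b| ≤ 1 := by
  rw [abs_le]; constructor <;> linarith [ha.1, ha.2, hb.1, hb.2]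

lemma glCut_le' (U : ℝ → ℝ → ℝ) (B : ℝ)
    (h : ∀ S T : Set ℝ, MeasurableSet S → MeasurableSet T → S ⊆ Set.Icc 0 1 → T ⊆ Set.Icc 0 1 →
      |∫ p in S ×ˢ T, U p.1 p.2| ≤ B) :
    cutNorm U ≤ B := by
  apply csSup_le
  · exact ⟨_, ∅, ∅, MeasurableSet.empty, MeasurableSet.empty, by simp, by simp, rfl⟩
  · rintro _ ⟨S, T, h1, h2, hS, hT, rfl⟩
    exact h S T h1 h2 hS hT

lemma glMeasVtx (n : ℕ) [NeZero n] (H : Fin n × Fin n → ℝ) :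
    Measurable (fun p : ℝ × ℝ => H (glVtx n p.1, glVtx n p.2)) := by
  have hvm : Measurable (fun p : ℝ × ℝ => (glVtx n p.1, glVtx n p.2)) :=
    ((glVtx_meas n).comp measurable_fst).prodMk ((glVtx_meas n).comp measurable_snd)
  exact (measurable_of_finite H).comp hvm

lemma glKey {n : ℕ} [NeZero n] (G : SimpleGraph (Fin n)) (π : Equiv.Perm (Fin n)) (j : ℕ)
    (W X : ℝ → ℝ → ℝ) (hW : IsGraphon W) (hXm : Measurable (Function.uncurry X))
    (hX : ∀ x y, X x y ∈ Set.Icc (0:ℝ) 1) (σ : ℝ → ℝ) (hσ : IsMPSelf σ) :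
    cutNorm (fun x y => graphonOfGraph G (glTau π (σ x)) (glTau π (σ y)) - X x y) ≤
      (glR G j + ∫ p, |glDens G (glSeq G j) (glSeq G j (π (glVtx n p.1)),
        glSeq G j (π (glVtx n p.2))) - W p.1 p.2| ∂(glP.prod glP)) +
      cutNorm (fun x y => W (σ x) (σ y) - X x y) := by
  apply glCut_le'
  intro S T hSm hTm hS hT
  have hle := glRect_le hS hT
  have hfin : IsFiniteMeasure (volume.restrict (S ×ˢ T)) :=
    ⟨lt_of_le_of_lt (hle _) (measure_lt_top (glP.prod glP) _)⟩
  set φ : ℝ → Fin n := fun x => π (glVtx n (σ x)) with hφ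
  have hφmp : MeasurePreserving φ glP (glMu n) := (glPhi_mp π).comp hσ.1
  obtain ⟨c, hc⟩ : ∃ c, c = glSeq G j := ⟨_, rfl⟩
  rw [← hc]
  set F : Fin n × Fin n → ℝ := fun w => glAdj G w - glDens G c (glPair c w) with hF
  have hpm : Measurable (fun p : ℝ × ℝ => (φ p.1, φ p.2)) :=
    (hφmp.measurable.comp measurable_fst).prodMk (hφmp.measurable.comp measurable_snd)
  obtain ⟨U, hU⟩ : ∃ U : ℝ × ℝ → ℝ, U = fun p => glDens G c (c (π (glVtx n p.1)),
    c (π (glVtx n p.2))) := ⟨_, rfl⟩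
  have hUmem : ∀ p, U p ∈ Set.Icc (0:ℝ) 1 := by
    intro p; rw [hU]; exact glDens_mem _ _ _
  have hUm : Measurable U := by
    have h2 := glMeasVtx n (fun w => glDens G c (c (π w.1), c (π w.2)))
    simp only at h2
    rw [hU]
    exact h2
  have hss := hσ.1.prod hσ.1
  have hWm : Measurable (fun p : ℝ × ℝ => W p.1 p.2) := hW.2.1
  have hXm' : Measurable (fun p : ℝ × ℝ => X p.1 p.2) := hXm
  set V : ℝ × ℝ → ℝ := fun p => U p - W p.1 p.2 with hV
  have hVm : Measurable V := hUm.sub hWm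
  have hVb : ∀ p, |V p| ≤ 1 := fun p => glAbs_sub (hUmem p) (hW.2.2 _ _)
  have hae : ∀ᵐ p ∂(volume.restrict (S ×ˢ T)),
      graphonOfGraph G (glTau π (σ p.1)) (glTau π (σ p.2)) - X p.1 p.2 =
        F (φ p.1, φ p.2) + V (σ p.1, σ p.2) + (W (σ p.1) (σ p.2) - X p.1 p.2) := by
    apply ae_mono hle
    have h0 := hσ.1.quasiMeasurePreserving.ae glP_ae_Ioc
    have h1 : ∀ᵐ p ∂(glP.prod glP), σ p.1 ∈ Set.Ioc (0:ℝ) 1 :=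
      Measure.quasiMeasurePreserving_fst.ae h0
    have h2 : ∀ᵐ p ∂(glP.prod glP), σ p.2 ∈ Set.Ioc (0:ℝ) 1 :=
      Measure.quasiMeasurePreserving_snd.ae h0
    filter_upwards [h1, h2] with p hp1 hp2
    rw [glGraphon_eq G (glTau_mem π hp1) (glTau_mem π hp2), glTau_vtx π hp1, glTau_vtx π hp2]
    simp only [hF, hV, hU, hφ, glPair]
    ring
  have i1 : Integrable (fun p : ℝ × ℝ => F (φ p.1, φ p.2)) (volume.restrict (S ×ˢ T)) :=
    glInteg _ _ 1 ((measurable_of_finite F).comp hpm)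
      (fun p => glAbs_sub (glAdj_mem _ _) (glDens_mem _ _ _))
  have i2 : Integrable (fun p : ℝ × ℝ => V (σ p.1, σ p.2)) (volume.restrict (S ×ˢ T)) :=
    glInteg _ _ 1 (hVm.comp hss.measurable) (fun p => hVb _)
  have i3 : Integrable (fun p : ℝ × ℝ => W (σ p.1) (σ p.2) - X p.1 p.2)
      (volume.restrict (S ×ˢ T)) :=
    glInteg _ _ 1 ((hWm.comp hss.measurable).sub hXm')
      (fun p => glAbs_sub (hW.2.2 _ _) (hX _ _))
  have e : ∫ p in S ×ˢ T, (graphonOfGraph G (glTau π (σ p.1)) (glTau π (σ p.2)) - X p.1 p.2) =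
      (∫ p in S ×ˢ T, F (φ p.1, φ p.2)) + (∫ p in S ×ˢ T, V (σ p.1, σ p.2)) +
        ∫ p in S ×ˢ T, (W (σ p.1) (σ p.2) - X p.1 p.2) := by
    rw [integral_congr_ae hae, ← integral_add i1 i2, 
      ← integral_add (by exact i1.add i2) i3]
  rw [e]
  have b1 : |∫ p in S ×ˢ T, F (φ p.1, φ p.2)| ≤ glR G j :=
    by
    rw [glR, ← hc]
    exact glCut n φ hφmp F _ (fun S T => glBest_spec G c (S, T)) S T hS hT
  have b2 : |∫ p in S ×ˢ T, V (σ p.1, σ p.2)| ≤ ∫ p, |V p| ∂(glP.prod glP) := by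
    have ia : Integrable (fun p : ℝ × ℝ => |V (σ p.1, σ p.2)|) (glP.prod glP) :=
      (glInteg _ _ 1 (hVm.comp hss.measurable) (fun p => hVb _)).abs
    calc |∫ p in S ×ˢ T, V (σ p.1, σ p.2)| ≤ ∫ p in S ×ˢ T, |V (σ p.1, σ p.2)| :=
          abs_integral_le_integral_abs
      _ ≤ ∫ p, |V (σ p.1, σ p.2)| ∂(glP.prod glP) :=
          integral_mono_measure hle (Eventually.of_forall fun p => abs_nonneg _) ia
      _ = ∫ p, |V p| ∂(glP.prod glP) := by
          conv_rhs => rw [← hss.map_eq]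
          rw [integral_map hss.measurable.aemeasurable hVm.abs.aestronglyMeasurable]
          rfl
  have b3 := glLe_cut (fun x y => W (σ x) (σ y) - X x y) 1
    (fun x y => glAbs_sub (hW.2.2 _ _) (hX _ _)) S T hSm hTm hS hT
  have e2 : ∫ p, |glDens G c (c (π (glVtx n p.1)), c (π (glVtx n p.2))) - W p.1 p.2|
      ∂(glP.prod glP) = ∫ p, |V p| ∂(glP.prod glP) := by
    simp only [hV, hU]
  rw [e2]
  exact (abs_add_le _ _).trans (add_le_add ((abs_add_le _ _).trans (add_le_add b1 b2)) b3)

lemma glDens_fin {n K : ℕ} (G : SimpleGraph (Fin n)) (c : Fin n → Fin K) (p : Fin K × Fin K) :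
    glDens G c p = glDens G (fun v => (c v : ℕ)) ((p.1 : ℕ), (p.2 : ℕ)) := by
  unfold glDens glAvg
  have : ∀ w, glPair c w = p ↔ glPair (fun v => (c v : ℕ)) w = ((p.1 : ℕ), (p.2 : ℕ)) := by
    intro w
    simp [glPair, Prod.ext_iff, Fin.ext_iff]
  simp only [this]

lemma glEnt_fin {n K : ℕ} (G : SimpleGraph (Fin n)) (c : Fin n → ℕ) (h : ∀ v, c v < K) :
    glEnt G (fun v => (⟨c v, h v⟩ : Fin K)) = glEnt G c := by
  unfold glEnt
  refine Finset.sum_congr rfl fun w _ => ?_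
  rw [glDens_fin]
  rfl

lemma glMain (Q : GraphClass)
    (WQ : ℝ → ℝ → ℝ) (hWQ : WQ ∈ limitSet Q)
    (hmax : graphonEnt WQ = sSup (graphonEnt '' limitSet Q))
    (huniq : ∀ W ∈ limitSet Q, graphonEnt W = graphonEnt WQ → deltaCut W WQ = 0)
    (ε : ℝ) (hε : 0 < ε) (nn : ℕ → ℕ) (hnn : ∀ k, k ≤ nn k) (hpos : ∀ k, 0 < nn k)
    (G : ∀ k, SimpleGraph (Fin (nn k))) (hG : ∀ k, G k ∈ Q (nn k))
    (hbad : ∀ k, ε < deltaCut (graphonOfGraph (G k)) WQ)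
    (hent : ∀ (k : ℕ) (col : Fin (nn k) → Fin (4 ^ k)),
      (graphonEnt WQ - 1 / ((k:ℝ) + 1)) * (nn k:ℝ) ^ 2 < glEnt (G k) col) : False := by
  have hz : ∀ k, NeZero (nn k) := fun k => ⟨(hpos k).ne'⟩
  set π : ∀ k, Equiv.Perm (Fin (nn k)) := fun k => Tuple.sort (glSeq (G k) k) with hπ
  have hsq : ∀ k, (0:ℝ) < (nn k : ℝ) ^ 2 := fun k => by
    have : (0:ℝ) < nn k := by exact_mod_cast hpos k
    positivity
  obtain ⟨W, hW, hWe, ψ, hψ, hlim⟩ := glLimit (graphonEnt WQ)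
    (fun k j x => glSeq (G k) j (π k (glVtx (nn k) x)))
    (fun k j => glDens (G k) (glSeq (G k) j)) (fun k j => glR (G k) j)
    (fun k j => (measurable_of_finite (fun v => glSeq (G k) j (π k v))).comp (glVtx_meas (nn k)))
    (fun k j x => glSeq_lt _ _ _)
    (by
      intro k j hjk x hx y hy hxy
      obtain ⟨i, rfl⟩ := Nat.exists_eq_add_of_le hjk
      simp only
      rw [← glSeq_div _ j i, ← glSeq_div _ j i]
      exact Nat.div_le_div_right
        (Tuple.monotone_sort (glSeq (G (j + i)) (j + i)) (glVtx_mono _ hx hy hxy)))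
    (fun k j p => glDens_mem _ _ _) (fun k j p => glDens_swap _ _ _)
    (by
      intro k i j hij
      obtain ⟨d, rfl⟩ := Nat.exists_eq_add_of_le hij
      have e1 := glInt (nn k) _ (glPhi_mp (π k)) (fun w =>
        (glDens (G k) (glSeq (G k) (i + d)) (glPair (glSeq (G k) (i + d)) w)
          - glDens (G k) (glSeq (G k) i) (glPair (glSeq (G k) i) w)) ^ 2)
      have e2 := glInt (nn k) _ (glPhi_mp (π k)) (fun w =>
        (glDens (G k) (glSeq (G k) (i + d)) (glPair (glSeq (G k) (i + d)) w)) ^ 2)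
      have e3 := glInt (nn k) _ (glPhi_mp (π k)) (fun w =>
        (glDens (G k) (glSeq (G k) i) (glPair (glSeq (G k) i) w)) ^ 2)
      have e4 := glEnergy_diff (G k) (glSeq (G k) i) (glSeq (G k) (i + d)) (fun a => a / 4 ^ d)
        (fun v => (glSeq_div (G k) i d v).symm)
      refine e1.trans ?_
      rw [e4, sub_div]
      exact congrArg₂ (· - ·) e2.symm e3.symm)
    (fun k j => ⟨glR_nonneg _ _, glR_le_one (hpos k) _ _⟩)
    (fun k J => glR_sum (hpos k) _ _)
    (by
      intro k j hjk
      have e1 := glInt (nn k) _ (glPhi_mp (π k)) (fun w =>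
        binEnt (glDens (G k) (glSeq (G k) j) (glPair (glSeq (G k) j) w)))
      have h1 := hent k (fun v => ⟨glSeq (G k) j v,
        (glSeq_lt _ _ _).trans_le (Nat.pow_le_pow_right (by norm_num) hjk)⟩)
      rw [glEnt_fin] at h1
      refine le_trans ?_ e1.symm.le
      rw [le_div_iff₀ (hsq k)]
      exact h1.le)
  -- the cut distance bound
  have hW01 : ∀ x y, W x y ∈ Set.Icc (0:ℝ) 1 := hW.2.2
  have hWlim : W ∈ limitSet Q := by
    refine ⟨hW, fun k => nn (ψ k), fun k => G (ψ k), fun k => hG _, ?_, ?_⟩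
    · exact tendsto_atTop_mono (fun k => (hψ.id_le k).trans (hnn _)) tendsto_id
    · rw [Metric.tendsto_nhds]
      intro η hη
      obtain ⟨j, hj⟩ := hlim η hη
      filter_upwards [hj] with k hk
      rw [Real.dist_eq, sub_zero, abs_of_nonneg (glDelta_nonneg _ _)]
      have h1 := glKey (G (ψ k)) (π (ψ k)) j W W hW hW.2.1 hW01 id glId_mp
      have h2 := glDelta_le (graphonOfGraph (G (ψ k))) W _ _ (glTau_mp (π (ψ k))) glId_mp
      have h3 : cutNorm (fun x y => W (id x) (id y) - W x y) ≤ 0 :=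
        glCut_le _ _ fun S T _ _ => by simp
      simp only [id] at h1 h2 h3
      linarith
  have hbdd : BddAbove (graphonEnt '' limitSet Q) := by
    refine ⟨1, ?_⟩
    rintro _ ⟨V, hV, rfl⟩
    rw [glEntropy_eq V hV.1]
    have hi : Integrable (fun p : ℝ × ℝ => binEnt (V p.1 p.2)) (glP.prod glP) :=
      glInteg _ _ 1 (binEnt_cont.measurable.comp hV.1.2.1) (fun p => by
        have := binEnt_mem (hV.1.2.2 p.1 p.2)
        rw [abs_of_nonneg this.1]; exact this.2)
    calc ∫ p, binEnt (V p.1 p.2) ∂(glP.prod glP) ≤ ∫ p, (1:ℝ) ∂(glP.prod glP) :=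
          integral_mono hi (integrable_const _) fun p => (binEnt_mem (hV.1.2.2 p.1 p.2)).2
      _ = 1 := by simp
  have heq : graphonEnt W = graphonEnt WQ :=
    le_antisymm (hmax ▸ le_csSup hbdd ⟨W, hWlim, rfl⟩) hWe
  have h0 := huniq W hWlim heq
  have hlt : deltaCut W WQ < ε / 2 := by rw [h0]; linarith
  unfold deltaCut at hlt
  have hlt' := exists_lt_of_csInf_lt (by exact ⟨_, id, id, glId_mp, glId_mp, rfl⟩) hlt
  obtain ⟨_, ⟨σ₁, σ₂, hσ₁, hσ₂, rfl⟩, hc⟩ := hlt'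
  obtain ⟨j, hj⟩ := hlim (ε / 2) (by linarith)
  obtain ⟨k, hk⟩ := hj.exists
  have hss := hσ₂.1.prod hσ₂.1
  have h1 := glKey (G (ψ k)) (π (ψ k)) j W (fun x y => WQ (σ₂ x) (σ₂ y)) hW
    (hWQ.1.2.1.comp hss.measurable) (fun x y => hWQ.1.2.2 _ _) σ₁ hσ₁
  have hcomp : IsMPSelf (fun x => glTau (π (ψ k)) (σ₁ x)) :=
    ⟨(glTau_mp (π (ψ k))).1.comp hσ₁.1, (glTau_mp (π (ψ k))).2.comp hσ₁.2⟩
  have h2 := glDelta_le (graphonOfGraph (G (ψ k))) WQ _ _ hcomp hσ₂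
  have h3 := hbad (ψ k)
  linarith

/-- Theorem 1.5: if the maximal entropy over `Q̂` is attained at a
unique graph limit `W_Q` and `log₂|Q_n|/C(n,2) → Ent(W_Q)`, then a uniformly random
element of `Q_n` converges to `W_Q` in probability. -/
theorem stmt12 (Q : GraphClass) (hQ : IsGraphClass Q)
    (hne : ∃ N : ℕ, ∀ n ≥ N, (Q n).Nonempty)
    (WQ : ℝ → ℝ → ℝ) (hWQ : WQ ∈ limitSet Q)
    (hmax : graphonEnt WQ = sSup (graphonEnt '' limitSet Q))
    (huniq : ∀ W ∈ limitSet Q, graphonEnt W = graphonEnt WQ → deltaCut W WQ = 0)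
    (hcount : Filter.Tendsto
      (fun n : ℕ => Real.logb 2 (Nat.card ↥(Q n) : ℝ) / choose2 n)
      Filter.atTop (nhds (graphonEnt WQ))) :
    ∀ ε : ℝ, 0 < ε →
      Filter.Tendsto (fun n : ℕ =>
          (Nat.card {G : SimpleGraph (Fin n) //
              G ∈ Q n ∧ ε < deltaCut (graphonOfGraph G) WQ} : ℝ) /
            (Nat.card ↥(Q n) : ℝ))
        Filter.atTop (nhds 0) := by
  intro ε hε
  by_contra hnot
  have hf : ∃ δ : ℝ, 0 < δ ∧ ∃ᶠ n : ℕ in atTop,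
      δ ≤ (Nat.card {G : SimpleGraph (Fin n) //
              G ∈ Q n ∧ ε < deltaCut (graphonOfGraph G) WQ} : ℝ) /
            (Nat.card ↥(Q n) : ℝ) := by
    by_contra hc
    push Not at hc
    apply hnot
    rw [Metric.tendsto_nhds]
    intro η hη
    filter_upwards [hc η hη] with n hn
    rw [Real.dist_eq, sub_zero, abs_of_nonneg (by positivity)]
    exact hn
  obtain ⟨δ, hδ, hbad⟩ := hf
  have hex := fun k : ℕ => glExists Q (graphonEnt WQ)
    (fun n G => ε < deltaCut (graphonOfGraph G) WQ) hcount δ hδ hbad (4 ^ k) k (by positivity)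
    (1 / ((k:ℝ) + 1)) (by positivity)
  choose nn h1 h2 G h3 h4 h5 using hex
  exact glMain Q WQ hWQ hmax huniq ε hε nn h1 h2 G h3 h4 h5

end
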